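/- Let $K$ be a field and $n \geq 3$ with $n \equiv 0 \pmod 3$. The top Betti number of the edge ideal of the $n$-cycle in degree $n$ is $\beta_{2n/3,\, n}(R/I(C_n)) = 2$, where $\beta_{i,j}$ denotes the graded Betti numbers of $R/I(C_n)$. -/

import Mathlib

open MvPolynomial

/-- The edge ideal `I(Cₙ)` of the `n`-cycle, vertices indexed by `ZMod n`. -/
noncomputable def cycleIdeal (K : Type) [Field K] (n : ℕ) :
    Ideal (MvPolynomial (ZMod n) K) :=
  Ideal.span (Set.range fun i : ZMod n => X i * X (i + 1))

/-- The graded free module `⨁ⱼ R(-j)^(b j)` over `R = K[x₁,…,xₙ]`: the free module on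
the index set `Σ j, Fin (b j)`, a generator with first component `j` being thought of as
having degree `j`. -/
abbrev GradedFreeMod (K : Type) [Field K] (n : ℕ) (b : ℕ → ℕ) : Type :=
  (Σ j : ℕ, Fin (b j)) →₀ MvPolynomial (ZMod n) K

/-- An element of `⨁ⱼ R(-j)^(b j)` is homogeneous of degree `d` if its coordinate at
each generator of degree `j` is a homogeneous polynomial of degree `d - j` (and vanishes
if `j > d`). -/
def IsHomogElem {K : Type} [Field K] {n : ℕ} {b : ℕ → ℕ} (d : ℕ)
    (f : GradedFreeMod K n b) : Prop :=
  ∀ s : Σ j : ℕ, Fin (b j),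
    MvPolynomial.IsHomogeneous (f s) (d - s.1) ∧ (f s ≠ 0 → s.1 ≤ d)

/-- A linear map of graded free modules is graded (of degree `0`) if it preserves
homogeneous elements and their degrees. -/
def IsGradedMap {K : Type} [Field K] {n : ℕ} {b b' : ℕ → ℕ}
    (φ : GradedFreeMod K n b →ₗ[MvPolynomial (ZMod n) K] GradedFreeMod K n b') : Prop :=
  ∀ d f, IsHomogElem d f → IsHomogElem d (φ f)

/-- The irrelevant maximal ideal `(x₁,…,xₙ)`. -/
noncomputable def irrelevantIdeal (K : Type) [Field K] (n : ℕ) :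
    Ideal (MvPolynomial (ZMod n) K) :=
  Ideal.span (Set.range (X : ZMod n → MvPolynomial (ZMod n) K))

/-- A minimal graded free resolution of `R/I` with graded Betti numbers `β i j`:
an exact sequence `⋯ → F₁ → F₀ → R/I → 0` of graded free modules `Fᵢ = ⨁ⱼ R(-j)^(β i j)`
with degree‑zero graded differentials whose images lie in `m·Fᵢ`, where `m = (x₁,…,xₙ)`.
The graded Betti numbers `β_{i,j}(R/I) = dim_K Tor_i(R/I, K)_j` may be read off any such
resolution. -/
structure MinimalGradedFreeResolution (K : Type) [Field K] (n : ℕ)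
    (I : Ideal (MvPolynomial (ZMod n) K)) (β : ℕ → ℕ → ℕ) : Type where
  /-- the differentials of the resolution -/
  d : ∀ i : ℕ, GradedFreeMod K n (β (i + 1)) →ₗ[MvPolynomial (ZMod n) K]
    GradedFreeMod K n (β i)
  /-- the augmentation `F₀ → R/I` -/
  aug : GradedFreeMod K n (β 0) →ₗ[MvPolynomial (ZMod n) K] (MvPolynomial (ZMod n) K ⧸ I)
  aug_surjective : Function.Surjective aug
  exact_at_zero : LinearMap.ker aug = LinearMap.range (d 0)
  exact : ∀ i : ℕ, LinearMap.ker (d i) = LinearMap.range (d (i + 1))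
  graded : ∀ i : ℕ, IsGradedMap (d i)
  aug_graded : ∀ (dd : ℕ) (f : GradedFreeMod K n (β 0)), IsHomogElem dd f →
    ∃ p : MvPolynomial (ZMod n) K, p.IsHomogeneous dd ∧ aug f = Ideal.Quotient.mk I p
  minimal : ∀ i : ℕ, LinearMap.range (d i) ≤
    irrelevantIdeal K n • (⊤ : Submodule (MvPolynomial (ZMod n) K) (GradedFreeMod K n (β i)))

/-!
In a minimal resolution every free module is Koszul-acyclic up to the constants spanned by its
generators, and these constants survive at each stage by minimality. Shifting dimensions along the
resolution therefore identifies `β p d` with the dimension of the Koszul homology of `R ⧸ I` in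
bidegree `(p, d)`.

Since `I(Cₙ)` is squarefree, lowering the exponent of a variable, `x^a ↦ x^a / x_v` for `a v ≥ 2`
and `x^a ↦ 0` otherwise, induces an operator on `R ⧸ I`, and the corresponding homotopies retract
the Koszul complex onto its squarefree multidegrees. In degree `n` only `(1, …, 1)` is left, where
the Koszul complex has one basis element for every vertex cover of the cycle. An element matching,
in the sense of discrete Morse theory, pairs off all vertex covers but two: the vertices `≢ 0` and
the vertices `≢ 2` modulo `3`. Both have `2n/3` elements, so no differential connects them and they
form a basis of the homology.
-/

/-- The dimension `dim P / Q` of a subquotient, meant for `Q ≤ P`; in general it is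
`dim P / (P ⊓ Q)`. -/
noncomputable def relfinrank {K N : Type*} [Ring K] [AddCommGroup N] [Module K N]
    (Q P : Submodule K N) : ℕ :=
  Module.finrank K (P ⧸ Q.comap P.subtype)

section Relfinrank

variable {K N N' : Type*} [Ring K] [AddCommGroup N] [Module K N] [AddCommGroup N'] [Module K N']

theorem relfinrank_map (g : N →ₗ[K] N') {Q P : Submodule K N} (hQP : Q ≤ P)
    (hker : P ⊓ LinearMap.ker g ≤ Q) :
    relfinrank (Q.map g) (P.map g) = relfinrank Q P := by
  let φ : P →ₗ[K] (P.map g ⧸ (Q.map g).comap (P.map g).subtype) :=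
    Submodule.mkQ _ ∘ₗ g.restrict fun _ => Submodule.mem_map_of_mem
  have φ_surjective : Function.Surjective φ := by
    refine (Submodule.mkQ_surjective _).comp ?_
    rintro ⟨_, x, hx, rfl⟩
    exact ⟨⟨x, hx⟩, rfl⟩
  have ker_φ : LinearMap.ker φ = Q.comap P.subtype := by
    ext ⟨x, hx⟩
    simp only [φ, LinearMap.mem_ker, LinearMap.comp_apply, Submodule.mkQ_apply,
      Submodule.Quotient.mk_eq_zero, Submodule.mem_comap, Submodule.subtype_apply,
      LinearMap.coe_restrict_apply, Submodule.mem_map]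
    refine ⟨?_, fun h => ⟨x, h, rfl⟩⟩
    rintro ⟨y, hy, hxy⟩
    have hsub : x - y ∈ Q := hker ⟨P.sub_mem hx (hQP hy), by simp [hxy]⟩
    simpa using Q.add_mem hsub hy
  rw [relfinrank, relfinrank, ← ker_φ]
  exact (φ.quotKerEquivOfSurjective φ_surjective).finrank_eq.symm

theorem relfinrank_eq_finrank (φ : N' →ₗ[K] N) {Q P : Submodule K N} (hφ : ∀ x, φ x ∈ P)
    (hinj : ∀ x, φ x ∈ Q → x = 0) (hsurj : ∀ c ∈ P, ∃ x, c - φ x ∈ Q) :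
    relfinrank Q P = Module.finrank K N' := by
  let ψ : N' →ₗ[K] (P ⧸ Q.comap P.subtype) := Submodule.mkQ _ ∘ₗ φ.codRestrict P hφ
  have ψ_injective : Function.Injective ψ := by
    rw [injective_iff_map_eq_zero]
    intro x hx
    exact hinj x (by simpa [ψ] using hx)
  have ψ_surjective : Function.Surjective ψ := by
    intro y
    obtain ⟨⟨c, hc⟩, rfl⟩ := Submodule.mkQ_surjective _ y
    obtain ⟨x, hx⟩ := hsurj c hc
    exact ⟨x, ((Submodule.Quotient.eq _).2 (by simpa using hx)).symm⟩
  exact (LinearEquiv.ofBijective ψ ⟨ψ_injective, ψ_surjective⟩).finrank_eq.symm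

end Relfinrank

section Koszul

variable {V : Type*} [Fintype V] [DecidableEq V]

/-- The sign relating `v ∧ e_S` to `e_{S ∪ {v}}`. No order on `V` is assumed: the basis vectors
are ordered through the arbitrary enumeration `Fintype.equivFin V`. -/
noncomputable def wedgeSign (v : V) (S : Finset V) : ℤ :=
  (-1) ^ (S.filter fun u => Fintype.equivFin V u < Fintype.equivFin V v).card

omit [DecidableEq V] in
theorem wedgeSign_mul_self (v : V) (S : Finset V) : wedgeSign v S * wedgeSign v S = 1 := by
  rw [wedgeSign, ← mul_pow]
  simp

theorem wedgeSign_insert (v : V) {w : V} {S : Finset V} (hw : w ∉ S) :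
    wedgeSign v (insert w S) =
      (if Fintype.equivFin V w < Fintype.equivFin V v then -1 else 1) * wedgeSign v S := by
  rw [wedgeSign, wedgeSign, Finset.filter_insert]
  split_ifs with h
  · rw [Finset.card_insert_of_notMem (by simp [hw]), pow_succ']
  · rw [one_mul]

theorem wedgeSign_mul_wedgeSign_insert {v w : V} (hvw : v ≠ w) {S : Finset V} (hv : v ∉ S)
    (hw : w ∉ S) :
    wedgeSign v S * wedgeSign w (insert v S) = -(wedgeSign w S * wedgeSign v (insert w S)) := by
  rw [wedgeSign_insert v hw, wedgeSign_insert w hv]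
  rcases lt_or_gt_of_ne ((Fintype.equivFin V).injective.ne hvw) with h | h <;>
  · simp only [h, if_true, not_lt_of_gt h, if_false]
    ring

theorem wedgeSign_insert_mul_wedgeSign_insert {v w : V} (hvw : v ≠ w) {S : Finset V} (hv : v ∉ S)
    (hw : w ∉ S) :
    wedgeSign v (insert w S) * wedgeSign w (insert v S) = -(wedgeSign w S * wedgeSign v S) := by
  rw [wedgeSign_insert v hw, wedgeSign_insert w hv]
  rcases lt_or_gt_of_ne ((Fintype.equivFin V).injective.ne hvw) with h | h <;>
  · simp only [h, if_true, not_lt_of_gt h, if_false]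
    ring

variable {K N N' : Type*} [CommRing K] [AddCommGroup N] [Module K N] [AddCommGroup N']
  [Module K N']

variable (K) in
/-- Contraction by the basis vector `v` on the exterior algebra of `K^V` with coefficients in `N`,
whose elements `∑ c S • e_S` are encoded as functions `c : Finset V → N`. -/
noncomputable def contract (v : V) : (Finset V → N) →ₗ[K] (Finset V → N) where
  toFun c S := if v ∈ S then 0 else wedgeSign v S • c (insert v S)
  map_add' c c' := by ext S; by_cases h : v ∈ S <;> simp [h]
  map_smul' a c := by ext S; by_cases h : v ∈ S <;> simp [h, smul_comm a]

variable (K) in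
/-- Exterior multiplication by the basis vector `v`, on the encoding used for `contract`. -/
noncomputable def wedge (v : V) : (Finset V → N) →ₗ[K] (Finset V → N) where
  toFun c S := if v ∈ S then wedgeSign v (S.erase v) • c (S.erase v) else 0
  map_add' c c' := by ext S; by_cases h : v ∈ S <;> simp [h]
  map_smul' a c := by ext S; by_cases h : v ∈ S <;> simp [h, smul_comm a]

theorem contract_apply (v : V) (c : Finset V → N) (S : Finset V) :
    contract K v c S = if v ∈ S then 0 else wedgeSign v S • c (insert v S) := rfl

theorem wedge_apply (v : V) (c : Finset V → N) (S : Finset V) :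
    wedge K v c S = if v ∈ S then wedgeSign v (S.erase v) • c (S.erase v) else 0 := rfl

theorem contract_wedge_self (v : V) (c : Finset V → N) (S : Finset V) :
    contract K v (wedge K v c) S = if v ∈ S then 0 else c S := by
  rw [contract_apply]
  split_ifs with h
  · rfl
  · simp [wedge_apply, Finset.erase_insert h, smul_smul, wedgeSign_mul_self]

theorem wedge_contract_self (v : V) (c : Finset V → N) (S : Finset V) :
    wedge K v (contract K v c) S = if v ∈ S then c S else 0 := by
  rw [wedge_apply]
  split_ifs with h
  · simp [contract_apply, Finset.insert_erase h, smul_smul, wedgeSign_mul_self]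
  · rfl

theorem contract_contract_self (v : V) (c : Finset V → N) :
    contract K v (contract K v c) = 0 := by
  ext S
  simp [contract_apply]

theorem contract_contract_of_ne {v w : V} (hvw : v ≠ w) (c : Finset V → N) :
    contract K v (contract K w c) = -contract K w (contract K v c) := by
  ext S
  rw [Pi.neg_apply]
  by_cases hv : v ∈ S
  · simp [contract_apply, hv]
  by_cases hw : w ∈ S
  · simp [contract_apply, hw]
  simp only [contract_apply, Finset.mem_insert, hv, hw, hvw, hvw.symm, or_false, if_false,
    smul_smul]
  rw [wedgeSign_mul_wedgeSign_insert hvw hv hw, Finset.insert_comm, neg_smul]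

theorem contract_wedge_of_ne {v w : V} (hvw : v ≠ w) (c : Finset V → N) :
    contract K v (wedge K w c) = -wedge K w (contract K v c) := by
  ext S
  rw [Pi.neg_apply]
  by_cases hv : v ∈ S
  · simp [contract_apply, wedge_apply, hv, hvw]
  by_cases hw : w ∈ S
  · obtain ⟨T, hwT, rfl⟩ : ∃ T, w ∉ T ∧ insert w T = S :=
      ⟨S.erase w, by simp, Finset.insert_erase hw⟩
    have hvT : v ∉ T := fun h => hv (Finset.mem_insert_of_mem h)
    have hwT' : w ∉ insert v T := by simp [hwT, hvw.symm]
    simp only [contract_apply, wedge_apply, hv, hvT, Finset.insert_comm v w T,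
      Finset.mem_insert_self, if_true, if_false, Finset.erase_insert hwT,
      Finset.erase_insert hwT', smul_smul]
    rw [wedgeSign_insert_mul_wedgeSign_insert hvw hvT hwT, neg_smul]
  · simp [contract_apply, wedge_apply, hw, hvw.symm]

theorem contract_compLeft (v : V) (f : N →ₗ[K] N') (c : Finset V → N) :
    contract K v (f.compLeft _ c) = f.compLeft _ (contract K v c) := by
  ext S
  by_cases h : v ∈ S <;> simp [contract_apply, h]

theorem wedge_compLeft (v : V) (f : N →ₗ[K] N') (c : Finset V → N) :
    wedge K v (f.compLeft _ c) = f.compLeft _ (wedge K v c) := by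
  ext S
  by_cases h : v ∈ S <;> simp [wedge_apply, h]

/-- The Koszul differential `∂ = ∑ᵥ xᵥ ⊗ ιᵥ` of a family `x` of operators on `N`, `ιᵥ` being
`contract`. -/
noncomputable def koszul (x : V → Module.End K N) : (Finset V → N) →ₗ[K] (Finset V → N) :=
  ∑ v, (x v).compLeft (Finset V) ∘ₗ contract K v

theorem koszul_eq_sum (x : V → Module.End K N) (c : Finset V → N) :
    koszul x c = ∑ v, (x v).compLeft _ (contract K v c) := by
  simp [koszul]

theorem koszul_apply (x : V → Module.End K N) (c : Finset V → N) (S : Finset V) :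
    koszul x c S = ∑ v, x v (contract K v c S) := by
  simp [koszul]

theorem koszul_compLeft {x : V → Module.End K N} {x' : V → Module.End K N'} {f : N →ₗ[K] N'}
    (hf : ∀ v m, f (x v m) = x' v (f m)) (c : Finset V → N) :
    koszul x' (f.compLeft _ c) = f.compLeft _ (koszul x c) := by
  ext S
  simp [koszul_apply, contract_compLeft, hf]

theorem koszul_koszul {x : V → Module.End K N} (hx : ∀ v w, Commute (x v) (x w))
    (c : Finset V → N) : koszul x (koszul x c) = 0 := by
  ext S
  simp only [koszul_apply, koszul_eq_sum, map_sum, Finset.sum_apply, contract_compLeft,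
    LinearMap.compLeft_apply, Function.comp_apply]
  rw [← Finset.sum_product', Pi.zero_apply]
  refine Finset.sum_involution (fun a _ => a.swap) ?_ ?_ (by simp) (by simp)
  · rintro ⟨v, w⟩ -
    rcases eq_or_ne v w with rfl | hvw
    · simp [contract_contract_self]
    · have hcomm : x w (x v (contract K w (contract K v c) S)) =
          x v (x w (contract K w (contract K v c) S)) := LinearMap.congr_fun (hx w v) _
      simp [contract_contract_of_ne hvw, hcomm]
  · rintro ⟨v, w⟩ - hne hswap
    obtain rfl : w = v := congrArg Prod.fst hswap
    simp [contract_contract_self] at hne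

/-- The map `1 - (∂h + h∂)` for the homotopy `h = D ⊗ (v ∧ ·)` on the Koszul complex, where `x` is
the operator attached to `v` and `D` commutes with the other ones; see `koszul_homotopy`. -/
noncomputable def koszulRetract (x D : Module.End K N) (v : V) : Module.End K (Finset V → N) :=
  LinearMap.pi fun S => (1 - if v ∈ S then D * x else x * D) ∘ₗ LinearMap.proj S

omit [Fintype V] in
theorem koszulRetract_apply (x D : Module.End K N) (v : V) (c : Finset V → N) (S : Finset V) :
    koszulRetract x D v c S = c S - if v ∈ S then D (x (c S)) else x (D (c S)) := by
  by_cases h : v ∈ S <;> simp [koszulRetract, h]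

omit [Fintype V] in
theorem koszulRetract_prod_compLeft {x D : V → Module.End K N} {x' D' : V → Module.End K N'}
    {f : N →ₗ[K] N'} (hx : ∀ v m, f (x v m) = x' v (f m)) (hD : ∀ v m, f (D v m) = D' v (f m))
    (l : List V) (c : Finset V → N) :
    (l.map fun v => koszulRetract (x' v) (D' v) v).prod (f.compLeft _ c) =
      f.compLeft _ ((l.map fun v => koszulRetract (x v) (D v) v).prod c) := by
  induction l with
  | nil => rfl
  | cons v l ih =>
    simp only [List.map_cons, List.prod_cons, Module.End.mul_apply, ih]
    ext S
    by_cases h : v ∈ S <;> simp [koszulRetract_apply, h, hx, hD]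

theorem koszul_homotopy {x : V → Module.End K N} {v : V} {D : Module.End K N}
    (hD : ∀ w, w ≠ v → Commute D (x w)) (c : Finset V → N) :
    koszul x (D.compLeft _ (wedge K v c)) + D.compLeft _ (wedge K v (koszul x c)) =
      c - koszulRetract (x v) D v c := by
  ext S
  simp only [Pi.add_apply, koszul_eq_sum, map_sum, Finset.sum_apply,
    contract_compLeft, wedge_compLeft, LinearMap.compLeft_apply, Function.comp_apply]
  rw [← Finset.sum_add_distrib, Finset.sum_eq_single v]
  · simp only [contract_wedge_self, wedge_contract_self, Pi.sub_apply, koszulRetract_apply]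
    split_ifs <;> simp
  · intro w _ hw
    have hcomm : D (x w (wedge K v (contract K w c) S)) = x w (D (wedge K v (contract K w c) S)) :=
      LinearMap.congr_fun (hD w hw) _
    simp [contract_wedge_of_ne hw, hcomm]
  · simp

end Koszul

section GradedKoszul

variable {V : Type*} {K N N' : Type*} [CommRing K] [AddCommGroup N] [Module K N]
  [AddCommGroup N'] [Module K N']

variable (V) in
/-- The Koszul chains of homological degree `p` and internal degree `d` for coefficients graded by
`G`. Every basis vector has internal degree `1`, so that the coefficient of `e_S` with `|S| = p`
has degree `d - p`; the coefficients with `|S| ≠ p` vanish. -/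
def koszulChains (G : ℤ → Submodule K N) (d : ℤ) (p : ℕ) : Submodule K (Finset V → N) where
  carrier := {c | ∀ S, c S ∈ G (d - p) ∧ (S.card ≠ p → c S = 0)}
  add_mem' ha hb S := ⟨add_mem (ha S).1 (hb S).1, fun h => by simp [(ha S).2 h, (hb S).2 h]⟩
  zero_mem' S := ⟨zero_mem _, fun _ => rfl⟩
  smul_mem' a c hc S := ⟨Submodule.smul_mem _ a (hc S).1, fun h => by simp [(hc S).2 h]⟩

theorem map_koszulChains (f : N →ₗ[K] N') (G : ℤ → Submodule K N) (d : ℤ) (p : ℕ) :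
    (koszulChains V G d p).map (f.compLeft _) = koszulChains V (fun d => (G d).map f) d p := by
  refine le_antisymm ?_ fun c hc => ?_
  · rintro _ ⟨c, hc, rfl⟩ S
    exact ⟨⟨c S, (hc S).1, rfl⟩, fun h => by simp [(hc S).2 h]⟩
  choose b hbG hbc using fun S => (hc S).1
  refine ⟨fun S => if S.card = p then b S else 0, fun S => ⟨?_, fun h => if_neg h⟩, ?_⟩
  · dsimp only
    split_ifs
    exacts [hbG S, zero_mem _]
  · ext S
    by_cases h : S.card = p
    · simp [h, hbc]
    · simp [h, (hc S).2 h]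

theorem koszulChains_inf_ker (f : N →ₗ[K] N') (G : ℤ → Submodule K N) (d : ℤ) (p : ℕ) :
    koszulChains V (fun d => G d ⊓ LinearMap.ker f) d p =
      koszulChains V G d p ⊓ LinearMap.ker (f.compLeft _) := by
  ext c
  exact ⟨fun hc => ⟨fun S => ⟨(hc S).1.1, (hc S).2⟩, funext fun S => (hc S).1.2⟩,
    fun hc S => ⟨⟨(hc.1 S).1, congrFun hc.2 S⟩, (hc.1 S).2⟩⟩

variable [Fintype V] [DecidableEq V] {x : V → Module.End K N} {x' : V → Module.End K N'}
  {G : ℤ → Submodule K N} {f : N →ₗ[K] N'}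

theorem koszul_mem_koszulChains (hxG : ∀ v d, G d ≤ (G (d + 1)).comap (x v)) {d : ℤ} {p : ℕ}
    {c : Finset V → N} (hc : c ∈ koszulChains V G d (p + 1)) :
    koszul x c ∈ koszulChains V G d p := by
  intro S
  rw [koszul_apply]
  refine ⟨sum_mem fun v _ => ?_, fun hS => Finset.sum_eq_zero fun v _ => ?_⟩
  · have hdeg : d - p = d - (p + 1 : ℕ) + 1 := by push_cast; ring
    rw [hdeg, contract_apply]
    refine hxG v _ ?_
    split_ifs
    exacts [zero_mem _, zsmul_mem (hc _).1 _]
  · rw [contract_apply]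
    split_ifs with h
    · simp
    · rw [(hc _).2 (by rw [Finset.card_insert_of_notMem h]; omega), smul_zero, map_zero]

theorem wedge_mem_koszulChains {D : Module.End K N} (hDG : ∀ d, G d ≤ (G (d - 1)).comap D) (v : V)
    {d : ℤ} {p : ℕ} {c : Finset V → N} (hc : c ∈ koszulChains V G d p) :
    D.compLeft _ (wedge K v c) ∈ koszulChains V G d (p + 1) := by
  intro S
  rw [LinearMap.compLeft_apply, Function.comp_apply, wedge_apply]
  refine ⟨?_, fun hS => ?_⟩
  · have hdeg : d - (p + 1 : ℕ) = d - p - 1 := by push_cast; ring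
    rw [hdeg]
    refine hDG _ ?_
    split_ifs
    exacts [zsmul_mem (hc _).1 _, zero_mem _]
  · split_ifs with h
    · rw [(hc _).2 (by have := Finset.card_erase_add_one h; omega), smul_zero, map_zero]
    · rw [map_zero]

variable (x G) in
/-- The cycles among the chains of bidegree `(d, p)`. -/
noncomputable def koszulCycles (d : ℤ) (p : ℕ) : Submodule K (Finset V → N) :=
  koszulChains V G d p ⊓ LinearMap.ker (koszul x)

variable (x G) in
/-- The boundaries of chains of bidegree `(d, p + 1)`, which lie in bidegree `(d, p)`. -/
noncomputable def koszulBoundaries (d : ℤ) (p : ℕ) : Submodule K (Finset V → N) :=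
  (koszulChains V G d (p + 1)).map (koszul x)

variable (x G) in
/-- The dimension of the Koszul homology `Hₚ(x; N)_d` of the graded coefficients `N = ⨁ G i`; for
`x` the variables of a polynomial ring this is the graded Betti number `dim Torₚ(N, K)_d`. -/
noncomputable def koszulHomologyDim (d : ℤ) (p : ℕ) : ℕ :=
  relfinrank (koszulBoundaries x G d p) (koszulCycles x G d p)

theorem koszulBoundaries_le_koszulCycles (hx : ∀ v w, Commute (x v) (x w))
    (hxG : ∀ v d, G d ≤ (G (d + 1)).comap (x v)) (d : ℤ) (p : ℕ) :
    koszulBoundaries x G d p ≤ koszulCycles x G d p := by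
  rintro _ ⟨c, hc, rfl⟩
  exact ⟨koszul_mem_koszulChains hxG hc, koszul_koszul hx c⟩

theorem koszulCycles_zero (d : ℤ) :
    koszulCycles x G d 0 = koszulChains V G d 0 := by
  refine inf_eq_left.2 fun c hc => funext fun S => ?_
  rw [koszul_apply]
  refine Finset.sum_eq_zero fun v _ => ?_
  rw [contract_apply]
  split_ifs with h
  · rw [map_zero]
  · rw [(hc _).2 (Finset.card_ne_zero_of_mem (Finset.mem_insert_self v S)), smul_zero, map_zero]

theorem koszulRetract_prod_of_mem_koszulCycles {D : V → Module.End K N}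
    (hx : ∀ v w, Commute (x v) (x w)) (hD : ∀ v w, w ≠ v → Commute (D v) (x w))
    (hxG : ∀ v d, G d ≤ (G (d + 1)).comap (x v)) (hDG : ∀ v d, G d ≤ (G (d - 1)).comap (D v))
    {d : ℤ} {p : ℕ} {c : Finset V → N} (hc : c ∈ koszulCycles x G d p) (l : List V) :
    (l.map fun v => koszulRetract (x v) (D v) v).prod c ∈ koszulCycles x G d p ∧
      c - (l.map fun v => koszulRetract (x v) (D v) v).prod c ∈ koszulBoundaries x G d p := by
  induction l with
  | nil => exact ⟨hc, by simp⟩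
  | cons v l ih =>
    simp only [List.map_cons, List.prod_cons, Module.End.mul_apply]
    set c' := (l.map fun v => koszulRetract (x v) (D v) v).prod c
    have hboundary : c' - koszulRetract (x v) (D v) v c' ∈ koszulBoundaries x G d p := by
      have hhomotopy := koszul_homotopy (hD v) c'
      rw [LinearMap.mem_ker.1 ih.1.2, map_zero, map_zero, add_zero] at hhomotopy
      exact hhomotopy ▸ Submodule.mem_map_of_mem (wedge_mem_koszulChains (hDG v) v ih.1.1)
    refine ⟨?_, ?_⟩
    · rw [← sub_sub_cancel c' (koszulRetract (x v) (D v) v c')]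
      exact sub_mem ih.1 (koszulBoundaries_le_koszulCycles hx hxG d p hboundary)
    · rw [← sub_add_sub_cancel c c']
      exact add_mem ih.2 hboundary

theorem map_compLeft_chains_inf_ker (hf : ∀ v m, f (x v m) = x' v (f m)) (d : ℤ) (p : ℕ) :
    (koszulChains V G d p ⊓ LinearMap.ker (f.compLeft _ ∘ₗ koszul x)).map (f.compLeft _) =
      koszulCycles x' (fun d => (G d).map f) d p := by
  have hcomm : koszul x' ∘ₗ f.compLeft _ = f.compLeft (Finset V) ∘ₗ koszul x :=
    LinearMap.ext (koszul_compLeft hf)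
  rw [koszulCycles, ← map_koszulChains, Submodule.map_inf_eq_map_inf_comap,
    ← LinearMap.ker_comp, hcomm]

theorem map_compLeft_koszulBoundaries (hf : ∀ v m, f (x v m) = x' v (f m)) (d : ℤ) (p : ℕ) :
    (koszulBoundaries x G d p).map (f.compLeft _) =
      koszulBoundaries x' (fun d => (G d).map f) d p := by
  have hcomm : koszul x' ∘ₗ f.compLeft _ = f.compLeft (Finset V) ∘ₗ koszul x :=
    LinearMap.ext (koszul_compLeft hf)
  rw [koszulBoundaries, koszulBoundaries, ← map_koszulChains, ← Submodule.map_comp,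
    ← Submodule.map_comp, hcomm]

theorem map_koszul_chains_inf_ker (hx : ∀ v w, Commute (x v) (x w))
    (hxG : ∀ v d, G d ≤ (G (d + 1)).comap (x v)) {d : ℤ} {p : ℕ}
    (hker : koszulCycles x (fun d => G d ⊓ LinearMap.ker f) d p ≤ koszulBoundaries x G d p) :
    (koszulChains V G d (p + 1) ⊓ LinearMap.ker (f.compLeft _ ∘ₗ koszul x)).map (koszul x) =
      koszulCycles x (fun d => G d ⊓ LinearMap.ker f) d p := by
  have hmap : (koszulChains V G d (p + 1) ⊓ LinearMap.ker (f.compLeft _ ∘ₗ koszul x)).map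
      (koszul x) = koszulBoundaries x G d p ⊓ LinearMap.ker (f.compLeft _) := by
    rw [koszulBoundaries, Submodule.map_inf_eq_map_inf_comap, ← LinearMap.ker_comp]
  have hchains := koszulChains_inf_ker (V := V) f G d p
  rw [hmap]
  refine le_antisymm (fun c hc => ?_) fun c hc => ⟨hker hc, (hchains.le hc.1).2⟩
  have hcycle := koszulBoundaries_le_koszulCycles hx hxG d p hc.1
  exact ⟨hchains.ge ⟨hcycle.1, hc.2⟩, hcycle.2⟩

/-- Both sides are images of one subquotient `P / Q` of the chains of `N`, the left one under `f`
and the right one under `∂`. -/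
theorem koszulHomologyDim_map_succ (hx : ∀ v w, Commute (x v) (x w))
    (hxG : ∀ v d, G d ≤ (G (d + 1)).comap (x v)) (hf : ∀ v m, f (x v m) = x' v (f m)) {d : ℤ}
    {p : ℕ} (hacyclic : koszulCycles x G d (p + 1) ≤ koszulBoundaries x G d (p + 1))
    (hker : koszulCycles x (fun d => G d ⊓ LinearMap.ker f) d p ≤ koszulBoundaries x G d p) :
    koszulHomologyDim x' (fun d => (G d).map f) d (p + 1) =
      koszulHomologyDim x (fun d => G d ⊓ LinearMap.ker f) d p := by
  set Z : ℤ → Submodule K N := fun d => G d ⊓ LinearMap.ker f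
  set P := koszulChains V G d (p + 1) ⊓ LinearMap.ker (f.compLeft _ ∘ₗ koszul x)
  set Q := koszulChains V Z d (p + 1) ⊔ koszulBoundaries x G d (p + 1)
  have hZ : koszulChains V Z d (p + 1) =
      koszulChains V G d (p + 1) ⊓ LinearMap.ker (f.compLeft _) := koszulChains_inf_ker f G d _
  have hQP : Q ≤ P := by
    refine sup_le (hZ ▸ fun c hc => ⟨hc.1, ?_⟩) fun c hc => ?_
    · rw [SetLike.mem_coe, LinearMap.mem_ker, LinearMap.comp_apply, ← koszul_compLeft hf,
        LinearMap.mem_ker.1 hc.2, map_zero]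
    · have hcycle := koszulBoundaries_le_koszulCycles hx hxG d (p + 1) hc
      exact ⟨hcycle.1, by simp [LinearMap.mem_ker.1 hcycle.2]⟩
  have hf_Q : Q.map (f.compLeft _) = koszulBoundaries x' (fun d => (G d).map f) d (p + 1) := by
    have hZ_map : (koszulChains V Z d (p + 1)).map (f.compLeft _) = ⊥ := by
      rw [hZ, eq_bot_iff, Submodule.map_le_iff_le_comap]
      exact inf_le_right
    rw [Submodule.map_sup, hZ_map, bot_sup_eq, map_compLeft_koszulBoundaries hf]
  have hx_Q : Q.map (koszul x) = koszulBoundaries x Z d p := by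
    have hsq : koszul x ∘ₗ koszul x = 0 := LinearMap.ext (koszul_koszul hx)
    simp only [Q, Submodule.map_sup, koszulBoundaries, ← Submodule.map_comp, hsq,
      Submodule.map_zero, sup_bot_eq]
  rw [koszulHomologyDim, koszulHomologyDim, ← map_compLeft_chains_inf_ker hf, ← hf_Q,
    ← map_koszul_chains_inf_ker hx hxG hker, ← hx_Q, relfinrank_map _ hQP, relfinrank_map _ hQP]
  · exact fun c hc => Submodule.mem_sup_right (hacyclic ⟨hc.1.1, hc.2⟩)
  · exact fun c hc => Submodule.mem_sup_left (hZ ▸ ⟨hc.1.1, hc.2⟩)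

end GradedKoszul

section PolynomialOperators

variable {V K : Type*} [CommRing K]

section MulX

variable (K) (N : Type*) [AddCommGroup N] [Module K N] [Module (MvPolynomial V K) N]
  [IsScalarTower K (MvPolynomial V K) N]

/-- Multiplication by the variable `X v` on a module over the polynomial ring, as a `K`-linear
operator. -/
noncomputable def mulX (v : V) : Module.End K N :=
  Algebra.lsmul K K N (X v : MvPolynomial V K)

theorem mulX_apply (v : V) (m : N) : mulX K N v m = (X v : MvPolynomial V K) • m := rfl

theorem commute_mulX (v w : V) : Commute (mulX K N v) (mulX K N w) :=
  (Commute.all (X v : MvPolynomial V K) (X w)).map _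

end MulX

variable (V K) in
/-- The homogeneous polynomials of degree `d`, with `d` in `ℤ` so that degrees can be subtracted. -/
noncomputable def degreePart (d : ℤ) : Submodule K (MvPolynomial V K) :=
  weightedHomogeneousSubmodule K (fun _ : V => (1 : ℤ)) d

theorem weight_one_eq_degree (a : V →₀ ℕ) :
    Finsupp.weight (fun _ : V => (1 : ℤ)) a = a.degree := by
  simp [Finsupp.weight_apply, Finsupp.sum, Finsupp.degree_apply]

theorem mem_degreePart {d : ℤ} {p : MvPolynomial V K} :
    p ∈ degreePart V K d ↔ ∀ a, coeff a p ≠ 0 → (a.degree : ℤ) = d := by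
  simp only [degreePart, mem_weightedHomogeneousSubmodule, IsWeightedHomogeneous,
    weight_one_eq_degree]

theorem monomial_mem_degreePart {a : V →₀ ℕ} (r : K) : monomial a r ∈ degreePart V K a.degree :=
  isWeightedHomogeneous_monomial _ _ _ (weight_one_eq_degree a)

theorem degreePart_le_comap_mulX (v : V) (d : ℤ) :
    degreePart V K d ≤ (degreePart V K (d + 1)).comap (mulX K _ v) := by
  intro p hp
  rw [add_comm]
  exact (isWeightedHomogeneous_X K _ v).mul hp

variable (K) in
/-- The operator which sends a monomial `x^a` to `x^a / x_v` if `a v > j`, and to `0` otherwise. -/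
noncomputable def lowerX (j : ℕ) (v : V) : Module.End K (MvPolynomial V K) where
  toFun p := monomial (Finsupp.single v j) 1 * p.divMonomial (Finsupp.single v (j + 1))
  map_add' p q := by rw [add_divMonomial, mul_add]
  map_smul' r p := by
    ext a
    simp [coeff_monomial_mul', coeff_divMonomial]

theorem coeff_lowerX (j : ℕ) (v : V) (p : MvPolynomial V K) (a : V →₀ ℕ) :
    coeff a (lowerX K j v p) = if a v < j then 0 else coeff (a + Finsupp.single v 1) p := by
  rw [lowerX, LinearMap.coe_mk, AddHom.coe_mk, coeff_monomial_mul']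
  by_cases h : j ≤ a v
  · rw [if_pos (Finsupp.single_le_iff.2 h), if_neg h.not_gt, coeff_divMonomial, one_mul,
      Finsupp.single_add, add_right_comm, add_tsub_cancel_of_le (Finsupp.single_le_iff.2 h)]
  · rw [if_neg (mt Finsupp.single_le_iff.1 h), if_pos (not_le.1 h)]

theorem degreePart_le_comap_lowerX (j : ℕ) (v : V) (d : ℤ) :
    degreePart V K d ≤ (degreePart V K (d - 1)).comap (lowerX K j v) := by
  intro p hp
  rw [Submodule.mem_comap, mem_degreePart]
  intro a ha
  rw [coeff_lowerX] at ha
  have hdeg := mem_degreePart.1 hp _ (fun h => ha (by rw [h, ite_self]))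
  rw [map_add, Finsupp.degree_single] at hdeg
  push_cast at hdeg
  omega

theorem commute_lowerX_mulX (j : ℕ) {v w : V} (hwv : w ≠ v) :
    Commute (lowerX K j v) (mulX K (MvPolynomial V K) w) := by
  classical
  refine LinearMap.ext fun p => ?_
  ext a
  have hsub : a + Finsupp.single v 1 - Finsupp.single w 1 =
      a - Finsupp.single w 1 + Finsupp.single v 1 := by
    ext u
    rcases eq_or_ne u v with rfl | hu
    · simp [Finsupp.single_eq_of_ne hwv.symm]
    · simp [Finsupp.single_eq_of_ne hu]
  simp only [Module.End.mul_apply, mulX_apply, smul_eq_mul, coeff_lowerX, coeff_X_mul',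
    Finsupp.mem_support_iff, Finsupp.add_apply, Finsupp.tsub_apply,
    Finsupp.single_eq_of_ne hwv, Finsupp.single_eq_of_ne hwv.symm, add_zero, tsub_zero, hsub]
  split_ifs <;> rfl

variable [DecidableEq V]

theorem coeff_koszulRetract (j : ℕ) (v : V) (c : Finset V → MvPolynomial V K) (S : Finset V)
    (a : V →₀ ℕ) :
    coeff a (koszulRetract (mulX K _ v) (lowerX K j v) v c S) =
      if a v + (if v ∈ S then 1 else 0) ≤ j then coeff a (c S) else 0 := by
  rw [koszulRetract_apply, coeff_sub]
  simp only [mulX_apply, smul_eq_mul]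
  by_cases hv : v ∈ S
  · rw [if_pos hv, if_pos hv, coeff_lowerX, add_comm a, coeff_X_mul]
    by_cases h : a v < j
    · rw [if_pos h, if_pos (Nat.succ_le_of_lt h), sub_zero]
    · rw [if_neg h, if_neg (by omega), sub_self]
  · rw [if_neg hv, if_neg hv, coeff_X_mul', add_zero]
    by_cases hav : v ∈ a.support
    · have ha : a - Finsupp.single v 1 + Finsupp.single v 1 = a :=
        tsub_add_cancel_of_le
          (Finsupp.single_le_iff.2 (Nat.one_le_iff_ne_zero.2 (by simpa using hav)))
      rw [if_pos hav, coeff_lowerX, ha, Finsupp.tsub_apply, Finsupp.single_eq_same]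
      have := Finsupp.mem_support_iff.1 hav
      by_cases h : a v ≤ j
      · rw [if_pos (by omega), if_pos h, sub_zero]
      · rw [if_neg (by omega), if_neg h, sub_self]
    · rw [if_neg hav, if_pos (by simp [Finsupp.notMem_support_iff.1 hav]), sub_zero]

theorem coeff_koszulRetract_prod (j : ℕ) (l : List V) (c : Finset V → MvPolynomial V K)
    (S : Finset V) (a : V →₀ ℕ) :
    coeff a ((l.map fun v => koszulRetract (mulX K _ v) (lowerX K j v) v).prod c S) =
      if ∀ v ∈ l, a v + (if v ∈ S then 1 else 0) ≤ j then coeff a (c S) else 0 := by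
  induction l with
  | nil => simp
  | cons v l ih =>
    simp only [List.map_cons, List.prod_cons, Module.End.mul_apply, coeff_koszulRetract, ih,
      ← ite_and, List.forall_mem_cons]

end PolynomialOperators

section FreeModules

variable {V K ι : Type*} [CommRing K] (deg : ι → ℤ)

variable (V K) in
/-- The elements of degree `d` in the graded free module `⨁ₛ R(-deg s)` over the polynomial ring
`R` in the variables `V`. -/
noncomputable def freeDegreePart (d : ℤ) : Submodule K (ι →₀ MvPolynomial V K) :=
  ⨅ s, (degreePart V K (d - deg s)).comap (Finsupp.lapply s)

variable {deg}

theorem mem_freeDegreePart {d : ℤ} {m : ι →₀ MvPolynomial V K} :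
    m ∈ freeDegreePart V K deg d ↔ ∀ s, m s ∈ degreePart V K (d - deg s) := by
  simp only [freeDegreePart, Submodule.mem_iInf, Submodule.mem_comap, Finsupp.lapply_apply]

theorem freeDegreePart_le_comap_mulX (v : V) (d : ℤ) :
    freeDegreePart V K deg d ≤ (freeDegreePart V K deg (d + 1)).comap (mulX K _ v) := by
  intro m hm
  refine mem_freeDegreePart.2 fun s => ?_
  rw [add_sub_right_comm]
  exact degreePart_le_comap_mulX v _ (mem_freeDegreePart.1 hm s)

variable [DecidableEq V]

variable (V) in
/-- The Koszul chain of homological degree `0` whose only coefficient is the vector of constant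
polynomials `a`. -/
noncomputable def constantChain : (ι →₀ K) →ₗ[K] (Finset V → ι →₀ MvPolynomial V K) :=
  LinearMap.single K _ ∅ ∘ₗ Finsupp.mapRange.linearMap (Algebra.linearMap K (MvPolynomial V K))

theorem constantCoeff_constantChain (a : ι →₀ K) (s : ι) :
    constantCoeff (constantChain V a ∅ s) = a s := by
  simp [constantChain]

theorem constantChain_mem_koszulChains {a : ι →₀ K} {d : ℤ} (ha : ∀ s, a s ≠ 0 → deg s = d) :
    constantChain V a ∈ koszulChains V (freeDegreePart V K deg) d 0 := by
  refine fun S => ⟨mem_freeDegreePart.2 fun s => ?_,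
    fun hS => Pi.single_eq_of_ne (by simpa using hS) _⟩
  by_cases h : S = ∅ ∧ a s ≠ 0
  · obtain ⟨rfl, has⟩ := h
    simpa [constantChain, ha s has] using monomial_mem_degreePart (V := V) (a := 0) (a s)
  · have hzero : constantChain V a S s = 0 := by
      rcases not_and_or.1 h with hS | has
      · simp [constantChain, hS]
      · by_cases hS : S = ∅ <;> simp [constantChain, hS, not_not.1 has]
    rw [hzero]
    exact zero_mem _

variable [Fintype V]

theorem mem_koszulBoundaries_of_constantCoeff_eq_zero {d : ℤ} {p : ℕ}
    {c : Finset V → ι →₀ MvPolynomial V K}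
    (hc : c ∈ koszulCycles (mulX K _) (freeDegreePart V K deg) d p)
    (hc0 : ∀ s, constantCoeff (c ∅ s) = 0) :
    c ∈ koszulBoundaries (mulX K _) (freeDegreePart V K deg) d p := by
  let D (v : V) : Module.End K (ι →₀ MvPolynomial V K) :=
    Finsupp.mapRange.linearMap (lowerX K 0 v)
  have hD (v w : V) (hwv : w ≠ v) : Commute (D v) (mulX K _ w) := by
    refine LinearMap.ext fun m => Finsupp.ext fun s => ?_
    exact LinearMap.congr_fun (commute_lowerX_mulX 0 hwv) (m s)
  have hDdeg (v : V) (d : ℤ) :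
      freeDegreePart V K deg d ≤ (freeDegreePart V K deg (d - 1)).comap (D v) := by
    intro m hm
    refine mem_freeDegreePart.2 fun s => ?_
    rw [sub_right_comm]
    exact degreePart_le_comap_lowerX 0 v _ (mem_freeDegreePart.1 hm s)
  have hretract := (koszulRetract_prod_of_mem_koszulCycles (commute_mulX K _) hD
    freeDegreePart_le_comap_mulX hDdeg hc Finset.univ.toList).2
  convert hretract using 1
  rw [eq_comm, sub_eq_self]
  ext S s a
  have hcoord := koszulRetract_prod_compLeft (f := Finsupp.lapply (R := K) s)
    (x := mulX K (ι →₀ MvPolynomial V K)) (x' := mulX K (MvPolynomial V K)) (D := D)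
    (D' := lowerX K 0) (fun _ _ => rfl) (fun _ _ => rfl) Finset.univ.toList c
  have hcoeff := congrArg (coeff a) (congrFun hcoord S)
  rw [coeff_koszulRetract_prod] at hcoeff
  refine hcoeff.symm.trans ?_
  split_ifs with h
  · simp only [Finset.mem_toList, Finset.mem_univ, forall_const, Nat.le_zero, Nat.add_eq_zero_iff,
      ite_eq_right_iff, one_ne_zero, imp_false] at h
    obtain rfl : a = 0 := Finsupp.ext fun v => (h v).1
    obtain rfl : S = ∅ := Finset.eq_empty_of_forall_notMem fun v => (h v).2
    exact hc0 s
  · simp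

theorem constantCoeff_koszul_mulX_empty (c : Finset V → ι →₀ MvPolynomial V K) (s : ι) :
    constantCoeff (koszul (mulX K _) c ∅ s) = 0 := by
  simp [koszul_apply, mulX_apply, Finsupp.finsetSum_apply]

theorem exists_sub_constantChain_mem_koszulBoundaries {d : ℤ}
    {c : Finset V → ι →₀ MvPolynomial V K} (hc : c ∈ koszulChains V (freeDegreePart V K deg) d 0) :
    ∃ a : ι →₀ K, (∀ s, a s ≠ 0 → deg s = d) ∧
      c - constantChain V a ∈ koszulBoundaries (mulX K _) (freeDegreePart V K deg) d 0 := by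
  let a : ι →₀ K := (c ∅).mapRange constantCoeff (map_zero _)
  have ha (s : ι) (hs : a s ≠ 0) : deg s = d := by
    have hdeg := mem_degreePart.1 (mem_freeDegreePart.1 (hc ∅).1 s) 0 hs
    simp only [map_zero, Nat.cast_zero] at hdeg
    omega
  refine ⟨a, ha, mem_koszulBoundaries_of_constantCoeff_eq_zero ?_ fun s => ?_⟩
  · rw [koszulCycles_zero]
    exact sub_mem hc (constantChain_mem_koszulChains ha)
  · rw [Pi.sub_apply, Finsupp.sub_apply, map_sub, constantCoeff_constantChain]
    exact sub_self _

section Map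

variable {N : Type*} [AddCommGroup N] [Module K N] [Module (MvPolynomial V K) N]
  [IsScalarTower K (MvPolynomial V K) N] {f : (ι →₀ MvPolynomial V K) →ₗ[MvPolynomial V K] N}

theorem koszulHomologyDim_map_freeDegreePart_succ
    (hf : ∀ m ∈ LinearMap.ker f, ∀ s, constantCoeff (m s) = 0) (d : ℤ) (p : ℕ) :
    koszulHomologyDim (mulX (V := V) K N)
        (fun d => (freeDegreePart V K deg d).map (f.restrictScalars K))
        d (p + 1) =
      koszulHomologyDim (mulX (V := V) K _)
        (fun d => freeDegreePart V K deg d ⊓ LinearMap.ker (f.restrictScalars K)) d p := by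
  refine koszulHomologyDim_map_succ (commute_mulX K _) freeDegreePart_le_comap_mulX
    (fun v m => f.map_smul (X v) m) ?_ ?_
  · intro c hc
    refine mem_koszulBoundaries_of_constantCoeff_eq_zero hc fun s => ?_
    rw [(hc.1 ∅).2 (by simp), Finsupp.zero_apply, map_zero]
  · intro c hc
    have hc' : c ∈ koszulCycles (mulX K _) (freeDegreePart V K deg) d p :=
      ⟨fun S => ⟨(hc.1 S).1.1, (hc.1 S).2⟩, hc.2⟩
    exact mem_koszulBoundaries_of_constantCoeff_eq_zero hc' (hf _ (hc.1 ∅).1.2)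

theorem koszulHomologyDim_map_freeDegreePart_zero [Nontrivial K]
    (hf : ∀ m ∈ LinearMap.ker f, ∀ s, constantCoeff (m s) = 0) (d : ℤ) :
    koszulHomologyDim (mulX (V := V) K N)
        (fun d => (freeDegreePart V K deg d).map (f.restrictScalars K)) d 0 =
      Nat.card {s // deg s = d} := by
  let φ : Finsupp.supported K K {s | deg s = d} →ₗ[K] (Finset V → N) :=
    (f.restrictScalars K).compLeft _ ∘ₗ constantChain V ∘ₗ Submodule.subtype _
  have hcomm (c : Finset V → ι →₀ MvPolynomial V K) :
      koszul (mulX (V := V) K N) ((f.restrictScalars K).compLeft _ c) =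
        (f.restrictScalars K).compLeft _ (koszul (mulX K _) c) :=
    koszul_compLeft (fun v m => f.map_smul (X v) m) c
  rw [koszulHomologyDim, koszulCycles_zero, koszulBoundaries, ← map_koszulChains,
    ← map_koszulChains, relfinrank_eq_finrank (N' := Finsupp.supported K K {s | deg s = d}) φ,
    (Finsupp.supportedEquivFinsupp _).finrank_eq,
    Module.finrank_eq_nat_card_basis Finsupp.basisSingleOne]
  · rfl
  · exact fun a =>
      Submodule.mem_map_of_mem (constantChain_mem_koszulChains fun _ hs => a.2 (by simpa using hs))
  · rintro a ⟨_, ⟨c, -, rfl⟩, hφ⟩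
    rw [hcomm] at hφ
    ext s
    have hmem : constantChain V a.1 ∅ - koszul (mulX K _) c ∅ ∈ LinearMap.ker f := by
      rw [LinearMap.mem_ker, map_sub, sub_eq_zero]
      exact (congrFun hφ ∅).symm
    have hcoeff := hf _ hmem s
    rwa [Finsupp.sub_apply, map_sub, constantCoeff_constantChain, constantCoeff_koszul_mulX_empty,
      sub_zero] at hcoeff
  · rintro _ ⟨c, hc, rfl⟩
    obtain ⟨a, ha, e, he, hce⟩ := exists_sub_constantChain_mem_koszulBoundaries hc
    refine ⟨⟨a, fun s hs => ha s (by simpa using hs)⟩, _, Submodule.mem_map_of_mem he, ?_⟩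
    rw [hcomm, hce, map_sub]
    rfl

end Map

end FreeModules

section Resolution

section GradedModules

variable {K N N' : Type*} [Ring K] [AddCommGroup N] [Module K N] [AddCommGroup N'] [Module K N']

theorem map_eq_range_inf_of_iSupIndep {f : N →ₗ[K] N'} {G : ℤ → Submodule K N}
    {G' : ℤ → Submodule K N'} (hG : ⨆ d, G d = ⊤) (hG' : iSupIndep G')
    (hf : ∀ d, G d ≤ (G' d).comap f) (d : ℤ) :
    (G d).map f = LinearMap.range f ⊓ G' d := by
  refine le_antisymm (le_inf LinearMap.map_le_range (Submodule.map_le_iff_le_comap.2 (hf d))) ?_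
  rintro _ ⟨⟨m, rfl⟩, hm⟩
  have hm_top : m ∈ G d ⊔ ⨆ e ≠ d, G e :=
    (top_le_iff.2 hG).trans (iSup_split_single G d).le Submodule.mem_top
  obtain ⟨a, ha, b, hb, rfl⟩ := Submodule.mem_sup.1 hm_top
  have hb_others : f b ∈ ⨆ e ≠ d, G' e := by
    refine (?_ : ⨆ e ≠ d, G e ≤ (⨆ e ≠ d, G' e).comap f) hb
    exact iSup₂_le fun e he => (hf e).trans (Submodule.comap_mono (le_iSup₂_of_le e he le_rfl))
  have hb_deg : f b ∈ G' d := by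
    rw [← add_sub_cancel_left (f a) (f b), ← map_add]
    exact sub_mem hm (hf d ha)
  rw [map_add, Submodule.disjoint_def.1 (iSupIndep_def.1 hG' d) _ hb_deg hb_others, add_zero]
  exact Submodule.mem_map_of_mem ha

end GradedModules

section Gradings

variable {V K ι : Type*} [CommRing K] {deg : ι → ℤ}

theorem iSup_freeDegreePart : ⨆ d, freeDegreePart V K deg d = ⊤ := by
  refine eq_top_iff.2 fun m _ => ?_
  induction m using Finsupp.induction_linear with
  | zero => exact zero_mem _
  | add m m' hm hm' => exact add_mem (hm trivial) (hm' trivial)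
  | single s p =>
    induction p using MvPolynomial.induction_on' with
    | monomial a r =>
      refine Submodule.mem_iSup_of_mem (deg s + a.degree) (mem_freeDegreePart.2 fun t => ?_)
      rcases eq_or_ne t s with rfl | hts
      · simpa using monomial_mem_degreePart r
      · rw [Finsupp.single_eq_of_ne hts]
        exact zero_mem _
    | add p q hp hq =>
      rw [Finsupp.single_add]
      exact add_mem (hp trivial) (hq trivial)

theorem iSupIndep_freeDegreePart : iSupIndep (freeDegreePart V K deg) := by
  refine iSupIndep_def.2 fun d => Submodule.disjoint_def.2 fun m hm hm' => ?_
  ext s a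
  by_contra hne
  have hdeg := mem_degreePart.1 (mem_freeDegreePart.1 hm s) a hne
  have hle : ⨆ e ≠ d, freeDegreePart V K deg e ≤
      LinearMap.ker (lcoeff K a ∘ₗ Finsupp.lapply s) := by
    refine iSup₂_le fun e he m' hm' => ?_
    by_contra hne'
    have hdeg' := mem_degreePart.1 (mem_freeDegreePart.1 hm' s) a hne'
    omega
  exact hne (hle hm')

theorem freeDegreePart_eq_bot (hdeg : ∀ s, 0 ≤ deg s) {d : ℤ} (hd : d < 0) :
    freeDegreePart V K deg d = ⊥ := by
  refine (Submodule.eq_bot_iff _).2 fun m hm => ?_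
  ext s a
  by_contra hne
  have := mem_degreePart.1 (mem_freeDegreePart.1 hm s) a hne
  have := hdeg s
  omega

/-- The elements of degree `d` in the quotient `R ⧸ I` of a polynomial ring. -/
noncomputable def quotientDegreePart (I : Ideal (MvPolynomial V K)) (d : ℤ) :
    Submodule K (MvPolynomial V K ⧸ I) :=
  (degreePart V K d).map (I.mkQ.restrictScalars K)

theorem quotientDegreePart_le_comap_mulX {I : Ideal (MvPolynomial V K)} (v : V) (d : ℤ) :
    quotientDegreePart I d ≤ (quotientDegreePart I (d + 1)).comap (mulX K _ v) := by
  rintro _ ⟨p, hp, rfl⟩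
  exact ⟨_, degreePart_le_comap_mulX v d hp, I.mkQ.map_smul _ p⟩

theorem iSupIndep_quotientDegreePart {I : Ideal (MvPolynomial V K)}
    (hI : ∀ p ∈ I, ∀ d, weightedHomogeneousComponent (fun _ => (1 : ℤ)) d p ∈ I) :
    iSupIndep (quotientDegreePart I) := by
  refine iSupIndep_def.2 fun d => Submodule.disjoint_def.2 ?_
  rintro _ ⟨p, hp, rfl⟩ hp_others
  simp only [quotientDegreePart, ← Submodule.map_iSup] at hp_others
  obtain ⟨q, hq, hqp⟩ := hp_others
  have hle : ⨆ e ≠ d, degreePart V K e ≤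
      LinearMap.ker (weightedHomogeneousComponent (fun _ => (1 : ℤ)) d) :=
    iSup₂_le fun e he r hr => by
      rw [LinearMap.mem_ker, weightedHomogeneousComponent_of_mem hr, if_neg he.symm]
  have hcomponent := hI _ ((Submodule.Quotient.eq I).1 hqp.symm) d
  rw [map_sub, weightedHomogeneousComponent_of_mem hp, if_pos rfl, LinearMap.mem_ker.1 (hle hq),
    sub_zero] at hcomponent
  exact (Submodule.Quotient.mk_eq_zero I).2 hcomponent

end Gradings

section Betti

variable {K : Type} [Field K] {n : ℕ} {b b' : ℕ → ℕ}

/-- The degrees of the generators of `GradedFreeMod K n b`, as integers. -/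
def generatorDegree (b : ℕ → ℕ) (s : Σ j, Fin (b j)) : ℤ := s.1

theorem generatorDegree_nonneg (s : Σ j, Fin (b j)) : 0 ≤ generatorDegree b s :=
  Int.natCast_nonneg s.1

theorem isHomogElem_iff {d : ℕ} {f : GradedFreeMod K n b} :
    IsHomogElem d f ↔ f ∈ freeDegreePart (ZMod n) K (generatorDegree b) d := by
  rw [mem_freeDegreePart]
  refine forall_congr' fun s => ?_
  rw [mem_degreePart, generatorDegree]
  constructor
  · rintro ⟨hhom, hle⟩ a ha
    have hdeg := (DFunLike.congr_fun Finsupp.degree_eq_weight_one a).trans (hhom ha)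
    have := hle fun h => ha (by rw [h, coeff_zero])
    omega
  · refine fun h => ⟨fun a ha => ?_, fun hne => ?_⟩
    · refine (DFunLike.congr_fun Finsupp.degree_eq_weight_one a).symm.trans ?_
      have := h a ha
      omega
    · obtain ⟨a, ha⟩ := ne_zero_iff.1 hne
      have := h a ha
      omega

theorem constantCoeff_eq_zero_of_mem_irrelevantIdeal_smul_top {m : GradedFreeMod K n b}
    (hm : m ∈ irrelevantIdeal K n • (⊤ : Submodule (MvPolynomial (ZMod n) K) _))
    (s : Σ j, Fin (b j)) : constantCoeff (m s) = 0 := by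
  have hle : irrelevantIdeal K n ≤ RingHom.ker constantCoeff :=
    Ideal.span_le.2 (by rintro _ ⟨v, rfl⟩; exact constantCoeff_X K v)
  refine Submodule.smul_induction_on hm (fun r hr m _ => ?_) fun m m' hm hm' => ?_
  · rw [Finsupp.smul_apply, smul_eq_mul, map_mul, (RingHom.mem_ker).1 (hle hr), zero_mul]
  · rw [Finsupp.add_apply, map_add, hm, hm', add_zero]

theorem IsGradedMap.freeDegreePart_le_comap
    {φ : GradedFreeMod K n b →ₗ[MvPolynomial (ZMod n) K] GradedFreeMod K n b'}
    (hφ : IsGradedMap φ) (d : ℤ) :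
    freeDegreePart (ZMod n) K (generatorDegree b) d ≤
      (freeDegreePart (ZMod n) K (generatorDegree b') d).comap (φ.restrictScalars K) := by
  rcases lt_or_ge d 0 with hd | hd
  · rw [freeDegreePart_eq_bot generatorDegree_nonneg hd]
    exact bot_le
  · lift d to ℕ using hd
    exact fun f hf => isHomogElem_iff.1 (hφ d f (isHomogElem_iff.2 hf))

theorem card_generatorDegree_eq (b : ℕ → ℕ) (d : ℕ) :
    Nat.card {s // generatorDegree b s = d} = b d := by
  have e : {s // generatorDegree b s = d} ≃ Fin (b d) :=
    (Equiv.subtypeEquivRight fun s => Int.natCast_inj).trans (Equiv.sigmaSubtype d)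
  rw [Nat.card_congr e, Nat.card_fin]

namespace MinimalGradedFreeResolution

variable {I : Ideal (MvPolynomial (ZMod n) K)} {β : ℕ → ℕ → ℕ}
  (res : MinimalGradedFreeResolution K n I β)
include res

theorem freeDegreePart_le_comap_aug (d : ℤ) :
    freeDegreePart (ZMod n) K (generatorDegree (β 0)) d ≤
      (quotientDegreePart I d).comap (res.aug.restrictScalars K) := by
  rcases lt_or_ge d 0 with hd | hd
  · rw [freeDegreePart_eq_bot generatorDegree_nonneg hd]
    exact bot_le
  · lift d to ℕ using hd
    intro f hf
    obtain ⟨p, hp, hfp⟩ := res.aug_graded d f (isHomogElem_iff.2 hf)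
    refine ⟨p, mem_degreePart.2 fun a ha => ?_, hfp.symm⟩
    exact_mod_cast (DFunLike.congr_fun Finsupp.degree_eq_weight_one a).trans (hp ha)

theorem map_aug_freeDegreePart
    (hI : ∀ p ∈ I, ∀ d, weightedHomogeneousComponent (fun _ => (1 : ℤ)) d p ∈ I) (d : ℤ) :
    (freeDegreePart (ZMod n) K (generatorDegree (β 0)) d).map (res.aug.restrictScalars K) =
      quotientDegreePart I d := by
  rw [map_eq_range_inf_of_iSupIndep iSup_freeDegreePart (iSupIndep_quotientDegreePart hI)
    res.freeDegreePart_le_comap_aug,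
    (LinearMap.range_eq_top (f := res.aug.restrictScalars K)).2 res.aug_surjective, top_inf_eq]

theorem map_d_freeDegreePart (i : ℕ) (d : ℤ) :
    (freeDegreePart (ZMod n) K (generatorDegree (β (i + 1))) d).map
        ((res.d i).restrictScalars K) =
      freeDegreePart (ZMod n) K (generatorDegree (β i)) d ⊓
        LinearMap.range ((res.d i).restrictScalars K) := by
  rw [inf_comm]
  exact map_eq_range_inf_of_iSupIndep iSup_freeDegreePart iSupIndep_freeDegreePart
    (res.graded i).freeDegreePart_le_comap d

theorem constantCoeff_eq_zero_of_mem_ker_aug (m : GradedFreeMod K n (β 0))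
    (hm : m ∈ LinearMap.ker res.aug) (s : Σ j, Fin (β 0 j)) : constantCoeff (m s) = 0 :=
  constantCoeff_eq_zero_of_mem_irrelevantIdeal_smul_top
    (res.minimal 0 (res.exact_at_zero ▸ hm)) s

theorem constantCoeff_eq_zero_of_mem_ker_d (i : ℕ) (m : GradedFreeMod K n (β (i + 1)))
    (hm : m ∈ LinearMap.ker (res.d i)) (s : Σ j, Fin (β (i + 1) j)) : constantCoeff (m s) = 0 :=
  constantCoeff_eq_zero_of_mem_irrelevantIdeal_smul_top
    (res.minimal (i + 1) (res.exact i ▸ hm)) s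

variable [NeZero n]

theorem koszulHomologyDim_map_d
    (hI : ∀ p ∈ I, ∀ d, weightedHomogeneousComponent (fun _ => (1 : ℤ)) d p ∈ I)
    (i : ℕ) (d : ℤ) (p : ℕ) :
    koszulHomologyDim (V := ZMod n) (mulX K _)
        (fun d => (freeDegreePart (ZMod n) K (generatorDegree (β (i + 1))) d).map
          ((res.d i).restrictScalars K)) d p =
      koszulHomologyDim (V := ZMod n) (mulX K _) (quotientDegreePart I) d (p + (i + 1)) := by
  induction i generalizing p with
  | zero =>
    rw [← funext (res.map_aug_freeDegreePart hI),
      koszulHomologyDim_map_freeDegreePart_succ res.constantCoeff_eq_zero_of_mem_ker_aug]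
    congr! 2 with d
    rw [res.map_d_freeDegreePart, LinearMap.range_restrictScalars, LinearMap.ker_restrictScalars,
      res.exact_at_zero]
  | succ i ih =>
    rw [show p + (i + 1 + 1) = p + 1 + (i + 1) by ring, ← ih,
      koszulHomologyDim_map_freeDegreePart_succ (res.constantCoeff_eq_zero_of_mem_ker_d i)]
    congr! 2 with d
    rw [res.map_d_freeDegreePart, LinearMap.range_restrictScalars, LinearMap.ker_restrictScalars,
      res.exact i]

theorem betti_eq_koszulHomologyDim
    (hI : ∀ p ∈ I, ∀ d, weightedHomogeneousComponent (fun _ => (1 : ℤ)) d p ∈ I) (p d : ℕ) :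
    β p d = koszulHomologyDim (V := ZMod n) (mulX K _) (quotientDegreePart I) d p := by
  rw [← card_generatorDegree_eq (β p) d]
  cases p with
  | zero =>
    rw [← funext (res.map_aug_freeDegreePart hI),
      koszulHomologyDim_map_freeDegreePart_zero res.constantCoeff_eq_zero_of_mem_ker_aug]
  | succ i =>
    rw [← zero_add (i + 1), ← res.koszulHomologyDim_map_d hI,
      koszulHomologyDim_map_freeDegreePart_zero (res.constantCoeff_eq_zero_of_mem_ker_d i),
      zero_add]

end MinimalGradedFreeResolution

end Betti

end Resolution

section StanleyReisner

section SupportedChains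

variable {V : Type*} (K : Type*) [CommRing K] (𝒰 : UpperSet (Finset V))

/-- The `K`-valued functions on finite sets which are supported on the members of `𝒰` of
cardinality `p`. -/
def supportedChains (p : ℕ) : Submodule K (Finset V → K) where
  carrier := {f | ∀ S, f S ≠ 0 → S ∈ 𝒰 ∧ S.card = p}
  add_mem' hf hg S hS := by
    by_contra h
    exact hS (by rw [Pi.add_apply, not_not.1 (mt (hf S) h), not_not.1 (mt (hg S) h), add_zero])
  zero_mem' _ h := absurd rfl h
  smul_mem' r f hf S hS := hf S (right_ne_zero_of_mul hS)

open Classical in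
/-- The projection of the functions on finite sets onto those which vanish outside `𝒰`. -/
noncomputable def cutoff : (Finset V → K) →ₗ[K] (Finset V → K) :=
  LinearMap.pi fun S => if S ∈ 𝒰 then LinearMap.proj S else 0

variable {K 𝒰}

theorem cutoff_of_mem {S : Finset V} (hS : S ∈ 𝒰) (f : Finset V → K) : cutoff K 𝒰 f S = f S := by
  simp [cutoff, hS]

theorem cutoff_of_notMem {S : Finset V} (hS : S ∉ 𝒰) (f : Finset V → K) :
    cutoff K 𝒰 f S = 0 := by
  simp [cutoff, hS]

theorem cutoff_eq_self {p : ℕ} {f : Finset V → K} (hf : f ∈ supportedChains K 𝒰 p) :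
    cutoff K 𝒰 f = f := by
  ext S
  by_cases hS : S ∈ 𝒰
  · exact cutoff_of_mem hS f
  · rw [cutoff_of_notMem hS, not_not.1 fun h => hS (hf S h).1]

theorem cutoff_mem_supportedChains {p : ℕ} {f : Finset V → K} (hf : ∀ S, f S ≠ 0 → S.card = p) :
    cutoff K 𝒰 f ∈ supportedChains K 𝒰 p := by
  intro S hS
  have hmem : S ∈ 𝒰 := not_not.1 fun h => hS (cutoff_of_notMem h f)
  exact ⟨hmem, hf S (cutoff_of_mem hmem f ▸ hS)⟩

variable [Fintype V] [DecidableEq V]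

variable (K 𝒰) in
/-- The Koszul differential with all variables acting as `1`, cut off outside the upper set `𝒰`. If
the members of `𝒰` are the complements of the faces of a simplicial complex, this is its
coboundary operator. -/
noncomputable def restrictedKoszul : (Finset V → K) →ₗ[K] (Finset V → K) :=
  cutoff K 𝒰 ∘ₗ koszul (1 : V → Module.End K K)

variable (K 𝒰) in
/-- The dimension of the `p`-th homology of the functions supported on `𝒰`, with respect to
`restrictedKoszul`. -/
noncomputable def supportedHomologyDim (p : ℕ) : ℕ :=
  relfinrank ((supportedChains K 𝒰 (p + 1)).map (restrictedKoszul K 𝒰))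
    (supportedChains K 𝒰 p ⊓ LinearMap.ker (restrictedKoszul K 𝒰))

theorem restrictedKoszul_cutoff (f : Finset V → K) :
    restrictedKoszul K 𝒰 (cutoff K 𝒰 f) = restrictedKoszul K 𝒰 f := by
  ext S
  by_cases hS : S ∈ 𝒰
  · simp only [restrictedKoszul, LinearMap.comp_apply, cutoff_of_mem hS, koszul_apply,
      contract_apply, cutoff_of_mem (𝒰.upper (Finset.subset_insert _ S) hS)]
  · simp only [restrictedKoszul, LinearMap.comp_apply, cutoff_of_notMem hS]

end SupportedChains

section ComplementExponent

variable {V : Type*} [Fintype V] [DecidableEq V]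

/-- The exponent of the squarefree monomial `∏ v ∉ S, X v`. -/
noncomputable def complExp (S : Finset V) : V →₀ ℕ :=
  Finsupp.equivFunOnFinite.symm fun v => if v ∈ S then 0 else 1

theorem complExp_apply (S : Finset V) (v : V) : complExp S v = if v ∈ S then 0 else 1 := rfl

theorem compl_support_complExp (S : Finset V) : (complExp S).supportᶜ = S := by
  ext v
  simp [complExp_apply]

theorem complExp_insert_add_single {S : Finset V} {v : V} (hv : v ∉ S) :
    complExp (insert v S) + Finsupp.single v 1 = complExp S := by
  ext u
  rcases eq_or_ne u v with rfl | hu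
  · simp [complExp_apply, hv]
  · simp [complExp_apply, hu]

theorem sum_add_ite_mem (a : V →₀ ℕ) (S : Finset V) :
    ∑ v, (a v + if v ∈ S then 1 else 0) = a.degree + S.card := by
  rw [Finset.sum_add_distrib, Finsupp.degree_eq_sum]
  simp

theorem degree_complExp_add_card (S : Finset V) :
    (complExp S).degree + S.card = Fintype.card V := by
  rw [← sum_add_ite_mem, Fintype.card_eq_sum_ones]
  refine Finset.sum_congr rfl fun v _ => ?_
  rw [complExp_apply]
  split_ifs <;> rfl

theorem eq_complExp {a : V →₀ ℕ} {S : Finset V} (hle : ∀ v, a v + (if v ∈ S then 1 else 0) ≤ 1)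
    (hdeg : a.degree + S.card = Fintype.card V) : a = complExp S := by
  have hsum : ∑ v, (a v + if v ∈ S then 1 else 0) = ∑ _ : V, 1 := by
    rw [sum_add_ite_mem, hdeg, Fintype.card_eq_sum_ones]
  ext v
  have := (Finset.sum_eq_sum_iff_of_le fun v _ => hle v).1 hsum v (Finset.mem_univ v)
  rw [complExp_apply]
  split_ifs at this ⊢ <;> omega

end ComplementExponent

section Quotient

variable {V K : Type*} [CommRing K] {N : Type*} [AddCommGroup N] [Module K N]

/-- The `K`-linear map on `R ⧸ I` induced by a `K`-linear map on `R` which vanishes on `I`. -/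
noncomputable def quotientLift (I : Ideal (MvPolynomial V K)) (f : MvPolynomial V K →ₗ[K] N)
    (hf : ∀ p ∈ I, f p = 0) : (MvPolynomial V K ⧸ I) →ₗ[K] N :=
  (I.restrictScalars K).liftQ f hf ∘ₗ (Submodule.Quotient.restrictScalarsEquiv K I).symm

theorem quotientLift_mkQ {I : Ideal (MvPolynomial V K)} {f : MvPolynomial V K →ₗ[K] N}
    (hf : ∀ p ∈ I, f p = 0) (p : MvPolynomial V K) : quotientLift I f hf (I.mkQ p) = f p := rfl

end Quotient

variable {V K : Type*} [CommRing K] [Fintype V] [DecidableEq V] {I : Ideal (MvPolynomial V K)}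
  {𝒰 : UpperSet (Finset V)}

variable (V K) in
/-- The chain with coefficients in the polynomial ring, multigraded by `(1, …, 1)`, which is
determined by scalars. -/
noncomputable def complMonomials : (Finset V → K) →ₗ[K] (Finset V → MvPolynomial V K) :=
  LinearMap.pi fun S => monomial (complExp S) ∘ₗ LinearMap.proj S

variable (V K) in
/-- The scalars which determine the component of multidegree `(1, …, 1)` of a chain with
coefficients in the polynomial ring. -/
noncomputable def complCoeffs : (Finset V → MvPolynomial V K) →ₗ[K] (Finset V → K) :=
  LinearMap.pi fun S => lcoeff K (complExp S) ∘ₗ LinearMap.proj S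

theorem complMonomials_apply (f : Finset V → K) (S : Finset V) :
    complMonomials V K f S = monomial (complExp S) (f S) := rfl

theorem complCoeffs_apply (c : Finset V → MvPolynomial V K) (S : Finset V) :
    complCoeffs V K c S = coeff (complExp S) (c S) := rfl

theorem complCoeffs_complMonomials (f : Finset V → K) :
    complCoeffs V K (complMonomials V K f) = f := by
  ext S
  rw [complCoeffs_apply, complMonomials_apply, coeff_monomial, if_pos rfl]

theorem koszul_complMonomials (f : Finset V → K) :
    koszul (mulX K _) (complMonomials V K f) =
      complMonomials V K (koszul (1 : V → Module.End K K) f) := by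
  ext1 S
  rw [complMonomials_apply, koszul_apply, koszul_apply, map_sum]
  refine Finset.sum_congr rfl fun v _ => ?_
  rw [contract_apply, contract_apply]
  split_ifs with hv
  · simp only [map_zero]
  · rw [complMonomials_apply, mulX_apply, Pi.one_apply, Module.End.one_apply, map_zsmul, smul_comm,
      smul_eq_mul, X, monomial_mul, one_mul, add_comm, complExp_insert_add_single hv]

theorem complCoeffs_koszul (c : Finset V → MvPolynomial V K) :
    complCoeffs V K (koszul (mulX K _) c) =
      koszul (1 : V → Module.End K K) (complCoeffs V K c) := by
  ext1 S
  rw [complCoeffs_apply, koszul_apply, koszul_apply, coeff_sum]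
  refine Finset.sum_congr rfl fun v _ => ?_
  rw [contract_apply, contract_apply]
  split_ifs with hv
  · simp only [map_zero, coeff_zero]
  · rw [complCoeffs_apply, mulX_apply, Pi.one_apply, Module.End.one_apply,
      ← complExp_insert_add_single hv, add_comm, smul_eq_mul, coeff_X_mul, ← lcoeff_apply (R := K),
      map_zsmul, lcoeff_apply]

theorem complMonomials_mem_koszulChains {p : ℕ} {f : Finset V → K}
    (hf : ∀ S, f S ≠ 0 → S.card = p) :
    complMonomials V K f ∈ koszulChains V (degreePart V K) (Fintype.card V) p := by
  refine fun S => ⟨mem_degreePart.2 fun a ha => ?_, fun hS => ?_⟩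
  · rw [complMonomials_apply, coeff_monomial] at ha
    obtain ⟨rfl, hfS⟩ := ite_ne_right_iff.1 ha
    have := degree_complExp_add_card S
    have := hf S hfS
    omega
  · rw [complMonomials_apply, not_not.1 (mt (hf S) hS), map_zero]

/-- The retractions cut off all multidegrees with an entry `≥ 2`; in total degree `|V|` only the
multidegree `(1, …, 1)` remains. -/
theorem koszulRetract_prod_eq_complMonomials {p : ℕ} {c : Finset V → MvPolynomial V K}
    (hc : c ∈ koszulChains V (degreePart V K) (Fintype.card V) p) :
    (Finset.univ.toList.map fun v => koszulRetract (mulX K _ v) (lowerX K 1 v) v).prod c =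
      complMonomials V K (complCoeffs V K c) := by
  ext S a
  rw [coeff_koszulRetract_prod, complMonomials_apply, complCoeffs_apply, coeff_monomial]
  simp only [Finset.mem_toList, Finset.mem_univ, true_implies]
  by_cases ha : complExp S = a
  · subst ha
    rw [if_pos rfl, if_pos fun v => ?_]
    rw [complExp_apply]
    split_ifs <;> rfl
  · rw [if_neg ha]
    refine ite_eq_right_iff.2 fun hle => ?_
    by_contra hne
    have hcard : S.card = p := not_not.1 fun h => hne (by rw [(hc S).2 h, coeff_zero])
    have hdeg := mem_degreePart.1 (hc S).1 a hne
    exact ha (eq_complExp hle (by omega)).symm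

omit [Fintype V] [DecidableEq V] in
theorem koszulChains_quotientDegreePart (I : Ideal (MvPolynomial V K)) (d : ℤ) (p : ℕ) :
    koszulChains V (quotientDegreePart I) d p =
      (koszulChains V (degreePart V K) d p).map ((I.mkQ.restrictScalars K).compLeft _) :=
  (map_koszulChains _ _ _ _).symm

theorem quotient_complCoeffs_koszul
    {Φ : (Finset V → MvPolynomial V K ⧸ I) →ₗ[K] (Finset V → K)}
    (hΦ : ∀ c, Φ ((I.mkQ.restrictScalars K).compLeft _ c) = cutoff K 𝒰 (complCoeffs V K c)) :
    Φ ∘ₗ koszul (mulX (V := V) K _) = restrictedKoszul K 𝒰 ∘ₗ Φ := by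
  refine LinearMap.ext fun c => ?_
  obtain ⟨c, rfl⟩ : ∃ b, (I.mkQ.restrictScalars K).compLeft _ b = c :=
    ⟨fun S => (c S).out, funext fun S => (c S).out_eq'⟩
  rw [LinearMap.comp_apply, LinearMap.comp_apply,
    koszul_compLeft (x := mulX K _) fun v m => I.mkQ.map_smul _ m, hΦ, hΦ, complCoeffs_koszul,
    restrictedKoszul_cutoff]
  rfl

theorem map_koszulChains_quotientDegreePart
    {Φ : (Finset V → MvPolynomial V K ⧸ I) →ₗ[K] (Finset V → K)}
    (hΦ : ∀ c, Φ ((I.mkQ.restrictScalars K).compLeft _ c) = cutoff K 𝒰 (complCoeffs V K c))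
    (p : ℕ) :
    (koszulChains V (quotientDegreePart I) (Fintype.card V) p).map Φ =
      supportedChains K 𝒰 p := by
  rw [koszulChains_quotientDegreePart]
  refine le_antisymm ?_ fun f hf => ?_
  · rintro _ ⟨_, ⟨c, hc, rfl⟩, rfl⟩
    rw [hΦ]
    refine cutoff_mem_supportedChains fun S hS => not_not.1 fun h => hS ?_
    rw [complCoeffs_apply, (hc S).2 h, coeff_zero]
  · refine ⟨_, ⟨_, complMonomials_mem_koszulChains fun S hS => (hf S hS).2, rfl⟩, ?_⟩
    rw [hΦ, complCoeffs_complMonomials, cutoff_eq_self hf]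

/-- `I` is the Stanley–Reisner ideal of the simplicial complex whose faces are the complements of
the members of `𝒰`: it consists of the polynomials none of whose monomials is supported on a
face. -/
def IsStanleyReisner (I : Ideal (MvPolynomial V K)) (𝒰 : UpperSet (Finset V)) : Prop :=
  ∀ p, p ∈ I ↔ ∀ a, coeff a p ≠ 0 → a.supportᶜ ∉ 𝒰

namespace IsStanleyReisner

variable (hI : IsStanleyReisner I 𝒰)
include hI

theorem weightedHomogeneousComponent_mem :
    ∀ p ∈ I, ∀ d, weightedHomogeneousComponent (fun _ => (1 : ℤ)) d p ∈ I := by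
  refine fun p hp d => (hI _).2 fun a ha => (hI p).1 hp a fun h => ha ?_
  classical rw [coeff_weightedHomogeneousComponent, h, ite_self]

theorem lowerX_mem (v : V) {p : MvPolynomial V K} (hp : p ∈ I) : lowerX K 1 v p ∈ I := by
  refine (hI _).2 fun a ha => ?_
  rw [coeff_lowerX] at ha
  have hav : a v ≠ 0 := fun h => ha (if_pos (by omega))
  have hsupport : (a + Finsupp.single v 1).support = a.support := by
    ext u
    rcases eq_or_ne u v with rfl | hu
    · simp [hav]
    · simp [hu]
  rw [← hsupport]
  exact (hI p).1 hp _ fun h => ha (by rw [h, ite_self])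

theorem monomial_complExp_mem {S : Finset V} (hS : S ∉ 𝒰) (r : K) :
    monomial (complExp S) r ∈ I := by
  refine (hI _).2 fun a ha => ?_
  rw [coeff_monomial] at ha
  rw [← (ite_ne_right_iff.1 ha).1, compl_support_complExp]
  exact hS

theorem coeff_complExp_eq_zero {S : Finset V} (hS : S ∈ 𝒰) {p : MvPolynomial V K} (hp : p ∈ I) :
    coeff (complExp S) p = 0 := by
  by_contra h
  exact (hI p).1 hp _ h (by rwa [compl_support_complExp])

theorem mkQ_compLeft_complMonomials_cutoff (f : Finset V → K) :
    (I.mkQ.restrictScalars K).compLeft _ (complMonomials V K (cutoff K 𝒰 f)) =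
      (I.mkQ.restrictScalars K).compLeft _ (complMonomials V K f) := by
  ext1 S
  simp only [LinearMap.compLeft_apply, Function.comp_apply, complMonomials_apply]
  by_cases hS : S ∈ 𝒰
  · rw [cutoff_of_mem hS]
  · rw [cutoff_of_notMem hS, map_zero, map_zero]
    exact ((Submodule.Quotient.mk_eq_zero I).2 (hI.monomial_complExp_mem hS _)).symm

theorem exists_quotient_complCoeffs :
    ∃ Φ : (Finset V → MvPolynomial V K ⧸ I) →ₗ[K] (Finset V → K),
      ∀ c, Φ ((I.mkQ.restrictScalars K).compLeft _ c) = cutoff K 𝒰 (complCoeffs V K c) := by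
  classical
  have hvanish (S : Finset V) (p : MvPolynomial V K) (hp : p ∈ I) :
      (if S ∈ 𝒰 then lcoeff K (complExp S) else 0) p = 0 := by
    split_ifs with hS
    exacts [hI.coeff_complExp_eq_zero hS hp, rfl]
  refine ⟨LinearMap.pi fun S => quotientLift I _ (hvanish S) ∘ₗ LinearMap.proj S, fun c => ?_⟩
  ext S
  refine (quotientLift_mkQ (hvanish S) (c S)).trans ?_
  by_cases hS : S ∈ 𝒰
  · rw [if_pos hS, cutoff_of_mem hS]
    rfl
  · rw [if_neg hS, cutoff_of_notMem hS]
    rfl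

theorem exists_quotient_lowerX :
    ∃ D : V → Module.End K (MvPolynomial V K ⧸ I), ∀ v p,
      (I.mkQ.restrictScalars K) (lowerX K 1 v p) = D v ((I.mkQ.restrictScalars K) p) :=
  ⟨fun v => quotientLift I ((I.mkQ.restrictScalars K) ∘ₗ lowerX K 1 v) fun _ hp =>
    (Submodule.Quotient.mk_eq_zero I).2 (hI.lowerX_mem v hp), fun _ _ => rfl⟩

/-- Retracting along the operators induced by `lowerX K 1` moves a cycle by a boundary and
annihilates everything outside the multidegree `(1, …, 1)`. -/
theorem sub_mkQ_complMonomials_mem_koszulBoundaries {p : ℕ} {c : Finset V → MvPolynomial V K}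
    (hc : c ∈ koszulChains V (degreePart V K) (Fintype.card V) p)
    (hcycle : koszul (mulX (V := V) K _) ((I.mkQ.restrictScalars K).compLeft _ c) = 0) :
    (I.mkQ.restrictScalars K).compLeft _ c -
        (I.mkQ.restrictScalars K).compLeft _ (complMonomials V K (complCoeffs V K c)) ∈
      koszulBoundaries (mulX (V := V) K _) (quotientDegreePart I) (Fintype.card V) p := by
  obtain ⟨D, hD⟩ := hI.exists_quotient_lowerX
  have hx (v : V) (m : MvPolynomial V K) :
      (I.mkQ.restrictScalars K) (mulX K _ v m) = mulX K _ v ((I.mkQ.restrictScalars K) m) :=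
    I.mkQ.map_smul _ m
  have hD_comm (v w : V) (hwv : w ≠ v) : Commute (D v) (mulX K _ w) := by
    refine LinearMap.ext fun m => ?_
    obtain ⟨p, rfl⟩ := I.mkQ_surjective m
    have := congrArg (I.mkQ.restrictScalars K)
      (LinearMap.congr_fun (commute_lowerX_mulX 1 hwv).eq p)
    simp only [Module.End.mul_apply, hD, hx] at this
    exact this
  have hDG (v : V) (d : ℤ) : quotientDegreePart I d ≤
      (quotientDegreePart I (d - 1)).comap (D v) := by
    rintro _ ⟨p, hp, rfl⟩
    exact ⟨_, degreePart_le_comap_lowerX 1 v d hp, hD v p⟩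
  have hc_mem : (I.mkQ.restrictScalars K).compLeft _ c ∈
      koszulCycles (mulX (V := V) K _) (quotientDegreePart I) (Fintype.card V) p := by
    refine ⟨?_, hcycle⟩
    rw [koszulChains_quotientDegreePart]
    exact Submodule.mem_map_of_mem hc
  rw [← koszulRetract_prod_eq_complMonomials hc, ← koszulRetract_prod_compLeft hx hD]
  exact (koszulRetract_prod_of_mem_koszulCycles (commute_mulX K _) hD_comm
    quotientDegreePart_le_comap_mulX hDG hc_mem _).2

theorem koszul_mkQ_complMonomials (f : Finset V → K) :
    koszul (mulX (V := V) K _) ((I.mkQ.restrictScalars K).compLeft _ (complMonomials V K f)) =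
      (I.mkQ.restrictScalars K).compLeft _ (complMonomials V K (restrictedKoszul K 𝒰 f)) := by
  rw [koszul_compLeft (x := mulX K _) fun v m => I.mkQ.map_smul _ m, koszul_complMonomials,
    restrictedKoszul, LinearMap.comp_apply, hI.mkQ_compLeft_complMonomials_cutoff]

theorem map_koszulCycles_quotientDegreePart
    {Φ : (Finset V → MvPolynomial V K ⧸ I) →ₗ[K] (Finset V → K)}
    (hΦ : ∀ c, Φ ((I.mkQ.restrictScalars K).compLeft _ c) = cutoff K 𝒰 (complCoeffs V K c))
    (p : ℕ) :
    (koszulCycles (mulX (V := V) K _) (quotientDegreePart I) (Fintype.card V) p).map Φ =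
      supportedChains K 𝒰 p ⊓ LinearMap.ker (restrictedKoszul K 𝒰) := by
  refine le_antisymm ?_ fun f hf => ?_
  · rintro _ ⟨c, hc, rfl⟩
    refine ⟨map_koszulChains_quotientDegreePart hΦ p ▸ Submodule.mem_map_of_mem hc.1, ?_⟩
    have hcomm := LinearMap.congr_fun (quotient_complCoeffs_koszul hΦ) c
    rw [LinearMap.comp_apply, LinearMap.mem_ker.1 hc.2, map_zero] at hcomm
    exact hcomm.symm
  · refine ⟨_, ⟨?_, ?_⟩, (hΦ (complMonomials V K f)).trans ?_⟩
    · rw [koszulChains_quotientDegreePart]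
      exact Submodule.mem_map_of_mem (complMonomials_mem_koszulChains fun S hS => (hf.1 S hS).2)
    · refine (hI.koszul_mkQ_complMonomials f).trans ?_
      rw [LinearMap.mem_ker.1 hf.2, map_zero, map_zero]
    · rw [complCoeffs_complMonomials, cutoff_eq_self hf.1]

/-- Hochster's formula in the squarefree multidegree `(1, …, 1)`. -/
theorem koszulHomologyDim_eq_supportedHomologyDim (p : ℕ) :
    koszulHomologyDim (mulX (V := V) K _) (quotientDegreePart I) (Fintype.card V) p =
      supportedHomologyDim K 𝒰 p := by
  obtain ⟨Φ, hΦ⟩ := hI.exists_quotient_complCoeffs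
  have hboundaries : (koszulBoundaries (mulX (V := V) K _) (quotientDegreePart I)
      (Fintype.card V) p).map Φ =
        (supportedChains K 𝒰 (p + 1)).map (restrictedKoszul K 𝒰) := by
    rw [koszulBoundaries, ← Submodule.map_comp, quotient_complCoeffs_koszul hΦ, Submodule.map_comp,
      map_koszulChains_quotientDegreePart hΦ]
  rw [supportedHomologyDim, ← hboundaries,
    ← hI.map_koszulCycles_quotientDegreePart hΦ, koszulHomologyDim, relfinrank_map]
  · exact koszulBoundaries_le_koszulCycles (commute_mulX K _) quotientDegreePart_le_comap_mulX _ p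
  · rintro c ⟨⟨hc, hcycle⟩, hker⟩
    rw [koszulChains_quotientDegreePart] at hc
    obtain ⟨c, hc, rfl⟩ := hc
    have := hI.sub_mkQ_complMonomials_mem_koszulBoundaries hc hcycle
    rw [← hI.mkQ_compLeft_complMonomials_cutoff, ← hΦ, LinearMap.mem_ker.1 hker, map_zero,
      map_zero, sub_zero] at this
    exact this

end IsStanleyReisner

end StanleyReisner

section ElementMatching

variable {V : Type*} [DecidableEq V]

/-- The data of a discrete Morse matching on `𝒰` which pairs `S` with the set obtained from it by
adding or removing the vertex `a (rank S)`. The sets `S` with `N ≤ rank S` are not matched; they are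
the critical sets. -/
structure IsElementMatching (𝒰 : UpperSet (Finset V)) (rank : Finset V → ℕ) (a : ℕ → V)
    (N : ℕ) : Prop where
  rank_anti : ∀ S ∈ 𝒰, ∀ T, S ⊆ T → rank T ≤ rank S
  erase_mem : ∀ S ∈ 𝒰, rank S < N → S.erase (a (rank S)) ∈ 𝒰
  rank_insert : ∀ S ∈ 𝒰, rank S < N → rank (insert (a (rank S)) S) = rank S
  rank_erase : ∀ S ∈ 𝒰, rank S < N → rank (S.erase (a (rank S))) = rank S

variable {K : Type*} [CommRing K] [Fintype V] {𝒰 : UpperSet (Finset V)}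

theorem restrictedKoszul_restrictedKoszul (f : Finset V → K) :
    restrictedKoszul K 𝒰 (restrictedKoszul K 𝒰 f) = 0 := by
  rw [restrictedKoszul, LinearMap.comp_apply, LinearMap.comp_apply, ← LinearMap.comp_apply,
    ← restrictedKoszul, restrictedKoszul_cutoff, restrictedKoszul, LinearMap.comp_apply,
    koszul_koszul (x := (1 : V → Module.End K K)) fun _ _ => Commute.refl 1, map_zero]

theorem restrictedKoszul_congr {f g : Finset V → K} {S : Finset V}
    (h : S ∈ 𝒰 → ∀ v ∉ S, f (insert v S) = g (insert v S)) :
    restrictedKoszul K 𝒰 f S = restrictedKoszul K 𝒰 g S := by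
  by_cases hS : S ∈ 𝒰
  · rw [restrictedKoszul, LinearMap.comp_apply, LinearMap.comp_apply, cutoff_of_mem hS,
      cutoff_of_mem hS, koszul_apply, koszul_apply]
    refine Finset.sum_congr rfl fun v _ => ?_
    rw [contract_apply, contract_apply]
    split_ifs with hv
    · rfl
    · rw [h hS v hv]
  · rw [restrictedKoszul, LinearMap.comp_apply, LinearMap.comp_apply, cutoff_of_notMem hS,
      cutoff_of_notMem hS]

theorem restrictedKoszul_eq_zero {f : Finset V → K} {S : Finset V}
    (h : S ∈ 𝒰 → ∀ v ∉ S, f (insert v S) = 0) : restrictedKoszul K 𝒰 f S = 0 := by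
  rw [restrictedKoszul_congr (g := 0) h, map_zero, Pi.zero_apply]

theorem restrictedKoszul_mem_supportedChains {p : ℕ} {f : Finset V → K}
    (hf : f ∈ supportedChains K 𝒰 (p + 1)) :
    restrictedKoszul K 𝒰 f ∈ supportedChains K 𝒰 p := by
  intro S hS
  by_contra hmem
  refine hS (restrictedKoszul_eq_zero fun hS𝒰 v hv => ?_)
  by_contra hfv
  have hcard := (hf _ hfv).2
  rw [Finset.card_insert_of_notMem hv] at hcard
  exact hmem ⟨hS𝒰, Nat.succ_injective hcard⟩

namespace IsElementMatching

variable {rank : Finset V → ℕ} {a : ℕ → V} {N : ℕ} (h𝒰 : IsElementMatching 𝒰 rank a N)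
include h𝒰

theorem wedge_eq_zero_of_rank_insert_ne {f : Finset V → K} {S : Finset V} {v : V} (hS : S ∈ 𝒰)
    (hN : rank S < N) (hf : ∀ T ∈ 𝒰, rank T < rank S → f T = 0)
    (hne : rank (insert v S) ≠ rank S) : wedge K (a (rank S)) f (insert v S) = 0 := by
  rw [wedge_apply, ite_eq_right_iff]
  intro ha
  have hva : v ≠ a (rank S) := fun h => hne (h ▸ h𝒰.rank_insert S hS hN)
  have haS : a (rank S) ∈ S := (Finset.mem_insert.1 ha).resolve_left hva.symm
  have hSa := h𝒰.erase_mem S hS hN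
  have hrank_le : rank (insert v (S.erase (a (rank S)))) ≤ rank S :=
    (h𝒰.rank_anti _ hSa _ (Finset.subset_insert _ _)).trans_eq (h𝒰.rank_erase S hS hN)
  have hmem := 𝒰.upper (Finset.subset_insert v _) hSa
  rw [Finset.erase_insert_of_ne hva, hf _ hmem, smul_zero]
  refine hrank_le.lt_of_ne fun hrank => hne ?_
  have := h𝒰.rank_insert _ hmem (hrank.trans_lt hN)
  rwa [hrank, Finset.insert_comm, Finset.insert_erase haS] at this

theorem exists_restrictedKoszul_eq_of_rank_le {j p : ℕ} (hj : j < N) {f : Finset V → K}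
    (hf : f ∈ supportedChains K 𝒰 p) (hvanish : ∀ S ∈ 𝒰, rank S < j → f S = 0)
    (hcycle : ∀ S ∈ 𝒰, rank S = j → restrictedKoszul K 𝒰 f S = 0) :
    ∃ g ∈ supportedChains K 𝒰 (p + 1), ∀ S ∈ 𝒰, rank S ≤ j →
      restrictedKoszul K 𝒰 g S = f S := by
  classical
  let g (S : Finset V) : K := if S ∈ 𝒰 ∧ rank S = j then wedge K (a j) f S else 0
  refine ⟨g, fun S hS => ?_, fun S hS hle => ?_⟩
  · obtain ⟨⟨hmem, rfl⟩, hwedge⟩ := ite_ne_right_iff.1 hS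
    rw [wedge_apply] at hwedge
    obtain ⟨ha, hne⟩ := ite_ne_right_iff.1 hwedge
    have hcard := (hf _ (right_ne_zero_of_smul hne)).2
    exact ⟨hmem, by rw [← hcard, Finset.card_erase_add_one ha]⟩
  rcases hle.lt_or_eq with hlt | rfl
  · rw [hvanish S hS hlt]
    refine restrictedKoszul_eq_zero fun _ v _ => if_neg fun h => ?_
    exact (hlt.trans_le (h.2.symm.trans_le (h𝒰.rank_anti S hS _ (Finset.subset_insert v S)))).false
  · have hg : restrictedKoszul K 𝒰 g S = restrictedKoszul K 𝒰 (wedge K (a (rank S)) f) S := by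
      refine restrictedKoszul_congr fun _ v _ => ?_
      by_cases hrank : rank (insert v S) = rank S
      · exact if_pos ⟨𝒰.upper (Finset.subset_insert v S) hS, hrank⟩
      · rw [h𝒰.wedge_eq_zero_of_rank_insert_ne hS hj hvanish hrank]
        exact if_neg fun h => hrank h.2
    have hwedge : wedge K (a (rank S)) (koszul (1 : V → Module.End K K) f) S = 0 := by
      have := hcycle _ (h𝒰.erase_mem S hS hj) (h𝒰.rank_erase S hS hj)
      rw [restrictedKoszul, LinearMap.comp_apply, cutoff_of_mem (h𝒰.erase_mem S hS hj)] at this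
      rw [wedge_apply, this, smul_zero, ite_self]
    have hhomotopy := congrFun (koszul_homotopy (x := (1 : V → Module.End K K)) (v := a (rank S))
      (D := 1) (fun _ _ => Commute.refl 1) f) S
    simp only [Pi.add_apply, Pi.sub_apply, koszulRetract_apply, Pi.one_apply, Module.End.one_apply,
      ite_self, sub_self, sub_zero, LinearMap.compLeft_apply, Function.comp_apply, hwedge,
      add_zero] at hhomotopy
    rw [hg, restrictedKoszul, LinearMap.comp_apply, cutoff_of_mem hS]
    exact hhomotopy

theorem exists_restrictedKoszul_eq {p : ℕ} {f : Finset V → K} (hf : f ∈ supportedChains K 𝒰 p)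
    (hcycle : ∀ S ∈ 𝒰, rank S < N → restrictedKoszul K 𝒰 f S = 0) :
    ∃ g ∈ supportedChains K 𝒰 (p + 1), ∀ S ∈ 𝒰, rank S < N →
      restrictedKoszul K 𝒰 g S = f S := by
  suffices ∀ j ≤ N, ∃ g ∈ supportedChains K 𝒰 (p + 1), ∀ S ∈ 𝒰, rank S < j →
      restrictedKoszul K 𝒰 g S = f S from this N le_rfl
  intro j hj
  induction j with
  | zero => exact ⟨0, zero_mem _, fun S _ h => absurd h (Nat.not_lt_zero _)⟩
  | succ j ih =>
    obtain ⟨g, hg, hgf⟩ := ih (Nat.le_of_succ_le hj)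
    obtain ⟨g', hg', hg'f⟩ := h𝒰.exists_restrictedKoszul_eq_of_rank_le hj
      (sub_mem hf (restrictedKoszul_mem_supportedChains hg))
      (fun S hS hrank => by rw [Pi.sub_apply, hgf S hS hrank, sub_self])
      (fun S hS hrank => by
        rw [map_sub, restrictedKoszul_restrictedKoszul, sub_zero]
        exact hcycle S hS (hrank.trans_lt hj))
    refine ⟨g + g', add_mem hg hg', fun S hS hrank => ?_⟩
    rw [map_add, Pi.add_apply, hg'f S hS (Nat.le_of_lt_succ hrank), Pi.sub_apply, add_sub_cancel]

theorem restrictedKoszul_eq_zero_of_critical {p : ℕ} (hcard : ∀ S ∈ 𝒰, N ≤ rank S → S.card = p)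
    {f : Finset V → K} (hf : ∀ S, f S ≠ 0 → S ∈ 𝒰 ∧ N ≤ rank S) : restrictedKoszul K 𝒰 f = 0 := by
  ext S
  refine restrictedKoszul_eq_zero fun hS v hv => ?_
  by_contra hne
  obtain ⟨hmem, hrank⟩ := hf _ hne
  have hcard_insert := hcard _ hmem hrank
  have := hcard S hS (hrank.trans (h𝒰.rank_anti S hS _ (Finset.subset_insert v S)))
  rw [Finset.card_insert_of_notMem hv] at hcard_insert
  omega

theorem restrictedKoszul_eq_zero_of_rank_lt {p : ℕ} (hcard : ∀ S ∈ 𝒰, N ≤ rank S → S.card = p)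
    {f : Finset V → K} (hf : f ∈ supportedChains K 𝒰 (p + 1))
    (hcycle : ∀ S ∈ 𝒰, rank S < N → restrictedKoszul K 𝒰 f S = 0) :
    restrictedKoszul K 𝒰 f = 0 := by
  obtain ⟨g, hg, hgf⟩ := h𝒰.exists_restrictedKoszul_eq hf hcycle
  suffices f = restrictedKoszul K 𝒰 g by rw [this, restrictedKoszul_restrictedKoszul]
  ext S
  by_cases hS : S ∈ 𝒰 ∧ rank S < N
  · exact (hgf S hS.1 hS.2).symm
  · have hvanish {f : Finset V → K} (hf : f ∈ supportedChains K 𝒰 (p + 1)) : f S = 0 := by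
      by_contra hne
      obtain ⟨hmem, hcard_succ⟩ := hf S hne
      have := hcard S hmem (not_lt.1 fun h => hS ⟨hmem, h⟩)
      omega
    rw [hvanish hf, hvanish (restrictedKoszul_mem_supportedChains hg)]

theorem supportedHomologyDim_eq_ncard [Nontrivial K] {p : ℕ}
    (hcard : ∀ S ∈ 𝒰, N ≤ rank S → S.card = p) :
    supportedHomologyDim K 𝒰 p = {S | S ∈ 𝒰 ∧ N ≤ rank S}.ncard := by
  classical
  let C := {S // S ∈ 𝒰 ∧ N ≤ rank S}
  let φ : (C → K) →ₗ[K] (Finset V → K) := Function.ExtendByZero.linearMap K Subtype.val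
  have φ_apply_val (x : C → K) (S : C) : φ x S = x S := Subtype.val_injective.extend_apply _ _ _
  have φ_apply (x : C → K) (S : Finset V) (hS : φ x S ≠ 0) : S ∈ 𝒰 ∧ N ≤ rank S := by
    by_contra h
    exact hS (Function.extend_apply' _ _ _ fun ⟨T, hT⟩ => h (hT ▸ T.2))
  have φ_mem (x : C → K) : φ x ∈ supportedChains K 𝒰 p ⊓ LinearMap.ker (restrictedKoszul K 𝒰) :=
    ⟨fun S hS => ⟨(φ_apply x S hS).1, hcard S (φ_apply x S hS).1 (φ_apply x S hS).2⟩,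
      h𝒰.restrictedKoszul_eq_zero_of_critical hcard (φ_apply x)⟩
  have hfinrank : Module.finrank K (C → K) = {S | S ∈ 𝒰 ∧ N ≤ rank S}.ncard := by
    rw [Module.finrank_fintype_fun_eq_card, ← Nat.card_eq_fintype_card]
    exact Nat.card_coe_set_eq _
  rw [supportedHomologyDim, ← hfinrank]
  refine relfinrank_eq_finrank φ φ_mem ?_ ?_
  · rintro x ⟨b, hb, hbx⟩
    have hzero : φ x = 0 := by
      rw [← hbx]
      refine h𝒰.restrictedKoszul_eq_zero_of_rank_lt hcard hb fun S _ hrank => ?_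
      by_contra hne
      exact hrank.not_ge (φ_apply x S (hbx ▸ hne)).2
    ext S
    rw [← φ_apply_val x S, hzero]
    rfl
  · rintro c ⟨hc, hcycle⟩
    obtain ⟨g, hg, hgc⟩ := h𝒰.exists_restrictedKoszul_eq hc fun S _ _ => congrFun hcycle S
    refine ⟨fun S => (c - restrictedKoszul K 𝒰 g) S, g, hg, eq_sub_of_add_eq' ?_⟩
    rw [← eq_sub_iff_add_eq]
    ext S
    by_cases hS : S ∈ 𝒰 ∧ N ≤ rank S
    · exact φ_apply_val _ ⟨S, hS⟩
    · rw [not_not.1 (mt (φ_apply _ S) hS)]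
      by_cases hmem : S ∈ 𝒰
      · exact (sub_eq_zero.2 (hgc S hmem (not_le.1 fun h => hS ⟨hmem, h⟩)).symm).symm
      · by_contra hne
        exact hmem (sub_mem hc (restrictedKoszul_mem_supportedChains hg) S (Ne.symm hne)).1

end IsElementMatching

end ElementMatching

section Cycle

/-- The vertex covers of the `n`-cycle, that is, the complements of its independent sets. -/
def cycleVertexCovers (n : ℕ) : UpperSet (Finset (ZMod n)) where
  carrier := {S | ∀ i, i ∈ S ∨ i + 1 ∈ S}
  upper' _ _ hST hS i := (hS i).imp (@hST i) (@hST (i + 1))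

theorem mem_cycleVertexCovers {n : ℕ} {S : Finset (ZMod n)} :
    S ∈ cycleVertexCovers n ↔ ∀ i, i ∈ S ∨ i + 1 ∈ S := Iff.rfl

theorem erase_mem_cycleVertexCovers {n : ℕ} [Nontrivial (ZMod n)] {S : Finset (ZMod n)}
    {v : ZMod n} (hS : S ∈ cycleVertexCovers n) (hpred : v - 1 ∈ S) (hsucc : v + 1 ∈ S) :
    S.erase v ∈ cycleVertexCovers n := by
  rw [mem_cycleVertexCovers]
  intro i
  simp only [Finset.mem_erase]
  by_cases hi : i = v
  · exact Or.inr ⟨by simp [hi], hi ▸ hsucc⟩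
  by_cases hi' : i + 1 = v
  · exact Or.inl ⟨hi, eq_sub_of_add_eq hi' ▸ hpred⟩
  · exact (hS i).imp (And.intro hi) (And.intro hi')

theorem isStanleyReisner_cycleIdeal (K : Type) [Field K] (n : ℕ) [NeZero n] [Nontrivial (ZMod n)] :
    IsStanleyReisner (cycleIdeal K n) (cycleVertexCovers n) := by
  have hspan : cycleIdeal K n = Ideal.span ((fun s => monomial s (1 : K)) ''
      Set.range fun i : ZMod n => Finsupp.single i 1 + Finsupp.single (i + 1) 1) := by
    rw [cycleIdeal, ← Set.range_comp]
    congr 2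
    ext1 i
    simp [X, monomial_mul]
  have hle (a : ZMod n →₀ ℕ) (i : ZMod n) :
      Finsupp.single i 1 + Finsupp.single (i + 1) 1 ≤ a ↔ a i ≠ 0 ∧ a (i + 1) ≠ 0 := by
    have hne : i + 1 ≠ i := by simp
    refine ⟨fun h => ⟨fun h0 => ?_, fun h0 => ?_⟩, fun ⟨hi, hi'⟩ j => ?_⟩
    · simpa [h0] using h i
    · simpa [h0] using h (i + 1)
    · rcases eq_or_ne j i with rfl | hji
      · simpa [hne, Nat.one_le_iff_ne_zero] using hi
      rcases eq_or_ne j (i + 1) with rfl | hji'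
      · simpa [hne.symm, Nat.one_le_iff_ne_zero] using hi'
      · simp [hji, hji']
  intro p
  rw [hspan, mem_ideal_span_monomial_image]
  simp only [mem_support_iff, Set.exists_range_iff, hle, mem_cycleVertexCovers, Finset.mem_compl,
    Finsupp.mem_support_iff, not_forall, not_or, not_not]

end Cycle

section CycleMatching

variable {k : ℕ}

/-- Reduction modulo `3` of the vertices of the `3 * k`-cycle. -/
def residue (k : ℕ) : ZMod (3 * k) →+* ZMod 3 :=
  ZMod.castHom (dvd_mul_right 3 k) (ZMod 3)

theorem residue_three_mul_add (x y : ZMod (3 * k)) : residue k (3 * x + y) = residue k y := by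
  rw [map_add, map_mul, map_ofNat, show (OfNat.ofNat 3 : ZMod 3) = 0 from rfl, zero_mul, zero_add]

theorem exists_eq_of_residue_eq [NeZero k] {r : ℕ} (hr : r < 3) {v : ZMod (3 * k)}
    (hv : residue k v = r) : ∃ m < k, v = 3 * (m : ZMod (3 * k)) + r := by
  have hval : v.val % 3 = r := by
    rw [← ZMod.natCast_zmod_val v, map_natCast, ZMod.natCast_eq_natCast_iff'] at hv
    omega
  refine ⟨v.val / 3, by have := v.val_lt; omega, ?_⟩
  conv_lhs => rw [← ZMod.natCast_zmod_val v, ← Nat.div_add_mod v.val 3, hval]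
  push_cast
  rfl

/-- The events ordering the vertex covers `S` of the `3 * k`-cycle. If `0 ∈ S`, the relevant ones
are the memberships of `2, 5, 8, …`; if `0 ∉ S`, those of `3, 6, 9, …`, numbered from `k` on. -/
def IsExit (S : Finset (ZMod (3 * k))) (m : ℕ) : Prop :=
  (m < k ∧ 0 ∈ S ∧ 3 * (m : ZMod (3 * k)) + 2 ∈ S) ∨
    (k ≤ m ∧ 0 ∉ S ∧ 3 * ((m - k : ℕ) : ZMod (3 * k)) + 3 ∈ S)

/-- The first `m < 2 * k` such that `IsExit S m`, or `2 * k` if there is none. -/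
noncomputable def exitRank (S : Finset (ZMod (3 * k))) : ℕ :=
  sInf (insert (2 * k) {m | IsExit S m})

/-- The vertex between the one deciding on `IsExit S m` and the one deciding on the previous
event: it is added or removed by the matching on the sets of rank `m`. -/
def exitToggle (k m : ℕ) : ZMod (3 * k) :=
  if m < k then 3 * (m : ZMod (3 * k)) + 1 else 3 * ((m - k : ℕ) : ZMod (3 * k)) + 2

theorem exitRank_le {S : Finset (ZMod (3 * k))} {m : ℕ} (hm : IsExit S m) : exitRank S ≤ m :=
  Nat.sInf_le (Set.mem_insert_of_mem _ hm)

theorem isExit_exitRank {S : Finset (ZMod (3 * k))} (hS : exitRank S < 2 * k) :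
    IsExit S (exitRank S) :=
  (Nat.sInf_mem (Set.insert_nonempty _ _)).resolve_left hS.ne

theorem le_exitRank_iff {S : Finset (ZMod (3 * k))} :
    2 * k ≤ exitRank S ↔ ∀ m < 2 * k, ¬IsExit S m :=
  ⟨fun h _ hm hexit => (hm.trans_le h).not_ge (exitRank_le hexit),
    fun h => not_lt.1 fun hlt => h _ hlt (isExit_exitRank hlt)⟩

theorem exitRank_congr {S T : Finset (ZMod (3 * k))} (h : ∀ m, IsExit S m ↔ IsExit T m) :
    exitRank S = exitRank T := by
  simp only [exitRank, h]

theorem exitRank_eq_of_mem_iff {S T : Finset (ZMod (3 * k))} (hS : exitRank S < 2 * k)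
    (h : ∀ v ≠ exitToggle k (exitRank S), v ∈ S ↔ v ∈ T) : exitRank T = exitRank S := by
  have hres (v : ZMod (3 * k)) (hv : residue k v ≠ residue k (exitToggle k (exitRank S))) :
      v ∈ S ↔ v ∈ T := h v fun h => hv (congrArg _ h)
  rcases isExit_exitRank hS with ⟨hm, h0, -⟩ | ⟨hm, h0, -⟩
  · rw [exitToggle, if_pos hm, residue_three_mul_add, map_one] at hres
    refine exitRank_congr fun m => or_congr ?_ ?_
    · rw [hres 0 (by rw [map_zero]; decide),
        hres (_ + 2) (by rw [residue_three_mul_add, map_ofNat]; decide)]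
    · rw [hres 0 (by rw [map_zero]; decide),
        hres (_ + 3) (by rw [residue_three_mul_add, map_ofNat]; decide)]
  · rw [exitToggle, if_neg hm.not_gt, residue_three_mul_add, map_ofNat] at hres
    have hzero := hres 0 (by rw [map_zero]; decide)
    refine exitRank_congr fun m => or_congr ?_ ?_
    · simp only [h0, hzero.not.1 h0, false_and, and_false]
    · rw [hzero, hres (_ + 3) (by rw [residue_three_mul_add, map_ofNat]; decide)]

theorem exitRank_insert {S : Finset (ZMod (3 * k))} (hS : exitRank S < 2 * k) :
    exitRank (insert (exitToggle k (exitRank S)) S) = exitRank S :=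
  exitRank_eq_of_mem_iff hS fun v hv => by simp [hv]

theorem exitRank_erase {S : Finset (ZMod (3 * k))} (hS : exitRank S < 2 * k) :
    exitRank (S.erase (exitToggle k (exitRank S))) = exitRank S :=
  exitRank_eq_of_mem_iff hS fun v hv => by simp [hv]

theorem exitRank_anti [NeZero k] {S T : Finset (ZMod (3 * k))}
    (hS : S ∈ cycleVertexCovers (3 * k)) (hST : S ⊆ T) : exitRank T ≤ exitRank S := by
  rcases le_or_gt (2 * k) (exitRank S) with hrank | hrank
  · exact (Nat.sInf_le (Set.mem_insert _ _)).trans hrank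
  rcases isExit_exitRank hrank with ⟨hm, h0, hmem⟩ | ⟨hm, h0, hmem⟩
  · exact exitRank_le (Or.inl ⟨hm, hST h0, hST hmem⟩)
  by_cases h0T : 0 ∈ T
  · have hlast : 3 * ((k - 1 : ℕ) : ZMod (3 * k)) + 2 ∈ S := by
      refine (hS _).resolve_right fun h => h0 ?_
      convert h using 1
      rw [Nat.cast_pred (NeZero.pos k)]
      have := ZMod.natCast_self (3 * k)
      push_cast at this
      linear_combination -this
    have hpos := NeZero.pos k
    exact (exitRank_le (Or.inl ⟨by omega, h0T, hST hlast⟩)).trans (by omega)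
  · exact exitRank_le (Or.inr ⟨hm, h0T, hST hmem⟩)

theorem erase_exitToggle_mem_cycleVertexCovers [NeZero k] {S : Finset (ZMod (3 * k))}
    (hS : S ∈ cycleVertexCovers (3 * k)) (hrank : exitRank S < 2 * k) :
    S.erase (exitToggle k (exitRank S)) ∈ cycleVertexCovers (3 * k) := by
  have : Fact (1 < 3 * k) := ⟨by have := NeZero.pos k; omega⟩
  have hfirst (m : ℕ) (hm : m < exitRank S) : ¬IsExit S m := fun h => (exitRank_le h).not_gt hm
  rcases isExit_exitRank hrank with ⟨hm, h0, hmem⟩ | ⟨hm, h0, hmem⟩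
  · rw [exitToggle, if_pos hm]
    refine erase_mem_cycleVertexCovers hS ?_ ?_
    · rw [add_sub_cancel_right]
      generalize exitRank S = m at *
      rcases m with _ | m
      · simpa using h0
      · have h2 : 3 * (m : ZMod (3 * k)) + 2 ∉ S := fun h =>
          hfirst m (Nat.lt_succ_self m) (Or.inl ⟨by omega, h0, h⟩)
        convert (hS _).resolve_left h2 using 1
        push_cast
        ring
    · convert hmem using 1
      ring
  · rw [exitToggle, if_neg hm.not_gt]
    have h3 : 3 * ((exitRank S - k : ℕ) : ZMod (3 * k)) ∉ S := by
      rcases hm.eq_or_lt with hk | hk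
      · simpa [← hk] using h0
      · obtain ⟨j, hj⟩ : ∃ j, exitRank S = k + j + 1 := ⟨exitRank S - k - 1, by omega⟩
        rw [hj, show k + j + 1 - k = j + 1 by omega]
        intro h
        refine hfirst (k + j) (by omega) (Or.inr ⟨by omega, h0, ?_⟩)
        rw [Nat.add_sub_cancel_left]
        convert h using 1
        push_cast
        ring
    refine erase_mem_cycleVertexCovers hS ?_ ?_
    · convert (hS _).resolve_left h3 using 1
      ring
    · convert hmem using 1
      ring

theorem isElementMatching_cycleVertexCovers [NeZero k] :
    IsElementMatching (cycleVertexCovers (3 * k)) exitRank (exitToggle k) (2 * k) where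
  rank_anti _ hS _ := exitRank_anti hS
  erase_mem _ := erase_exitToggle_mem_cycleVertexCovers
  rank_insert _ _ := exitRank_insert
  rank_erase _ _ := exitRank_erase

variable [NeZero k]

/-- The vertices of the `3 * k`-cycle which are not congruent to `r` modulo `3`. -/
def coResidue (k : ℕ) [NeZero k] (r : ZMod 3) : Finset (ZMod (3 * k)) :=
  Finset.univ.filter fun v => residue k v ≠ r

theorem mem_coResidue {r : ZMod 3} {v : ZMod (3 * k)} : v ∈ coResidue k r ↔ residue k v ≠ r := by
  simp [coResidue]

theorem coResidue_injective : Function.Injective (coResidue k) := by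
  intro r s hrs
  obtain ⟨v, rfl⟩ := ZMod.castHom_surjective (dvd_mul_right 3 k) r
  by_contra h
  exact mem_coResidue.1 (hrs ▸ mem_coResidue.2 h : v ∈ coResidue k (residue k v)) rfl

theorem card_coResidue (r : ZMod 3) : (coResidue k r).card = 2 * k := by
  have hfiber (s : ZMod 3) : (Finset.univ.filter fun v => residue k v = s).card =
      (Finset.univ.filter fun v => residue k v = r).card :=
    AddMonoidHom.card_fiber_eq_of_mem_range (residue k)
      (ZMod.castHom_surjective (dvd_mul_right 3 k) s)
      (ZMod.castHom_surjective (dvd_mul_right 3 k) r)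
  have hsum := Finset.card_eq_sum_card_fiberwise (s := Finset.univ) (t := Finset.univ)
    (f := residue k) fun _ _ => Finset.mem_coe.2 (Finset.mem_univ _)
  simp only [hfiber, Finset.sum_const, Finset.card_univ, ZMod.card, smul_eq_mul] at hsum
  have hadd := Finset.card_filter_add_card_filter_not (s := Finset.univ) fun v => residue k v = r
  rw [Finset.card_univ, ZMod.card] at hadd
  simp only [coResidue, ne_eq]
  omega

theorem coResidue_mem_cycleVertexCovers (r : ZMod 3) :
    coResidue k r ∈ cycleVertexCovers (3 * k) := by
  intro v
  rw [mem_coResidue, mem_coResidue, map_add, map_one, ← not_and_or]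
  exact fun h => absurd (h.2.trans h.1.symm) (by simp)

theorem eq_coResidue {S : Finset (ZMod (3 * k))} (hS : S ∈ cycleVertexCovers (3 * k)) {r : ZMod 3}
    (h : ∀ v, residue k v = r → v ∉ S) : S = coResidue k r := by
  ext v
  rw [mem_coResidue]
  refine ⟨fun hv hr => h v hr hv, fun hv => ?_⟩
  have hcases : ∀ x r : ZMod 3, x ≠ r → x + 1 = r ∨ x - 1 = r := by decide
  rcases hcases _ _ hv with hr | hr
  · exact (hS v).resolve_right (h _ (by rw [map_add, map_one, hr]))
  · have := (hS (v - 1)).resolve_left (h _ (by rw [map_sub, map_one, hr]))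
    rwa [sub_add_cancel] at this

theorem eq_coResidue_of_le_exitRank {S : Finset (ZMod (3 * k))}
    (hS : S ∈ cycleVertexCovers (3 * k)) (hrank : 2 * k ≤ exitRank S) :
    S = coResidue k 0 ∨ S = coResidue k 2 := by
  rw [le_exitRank_iff] at hrank
  by_cases h0 : 0 ∈ S
  · refine Or.inr (eq_coResidue hS fun v hv hvS => ?_)
    obtain ⟨m, hm, rfl⟩ := exists_eq_of_residue_eq (r := 2) (by omega) hv
    exact hrank m (by omega) (Or.inl ⟨hm, h0, hvS⟩)
  · refine Or.inl (eq_coResidue hS fun v hv hvS => ?_)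
    obtain ⟨m, hm, rfl⟩ := exists_eq_of_residue_eq (r := 0) (by omega) (hv.trans Nat.cast_zero.symm)
    rcases m with _ | m
    · exact h0 (by simpa using hvS)
    · refine hrank (k + m) (by omega) (Or.inr ⟨by omega, h0, ?_⟩)
      rw [Nat.add_sub_cancel_left]
      convert hvS using 1
      push_cast
      ring

theorem le_exitRank_coResidue_zero : 2 * k ≤ exitRank (coResidue k 0) := by
  rw [le_exitRank_iff]
  rintro m - (⟨-, h0, -⟩ | ⟨-, -, h3⟩)
  · exact mem_coResidue.1 h0 (map_zero _)
  · refine mem_coResidue.1 h3 ?_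
    rw [residue_three_mul_add, map_ofNat]
    decide

theorem le_exitRank_coResidue_two : 2 * k ≤ exitRank (coResidue k 2) := by
  rw [le_exitRank_iff]
  rintro m - (⟨-, -, h2⟩ | ⟨-, h0, -⟩)
  · exact mem_coResidue.1 h2 (by rw [residue_three_mul_add, map_ofNat])
  · exact h0 (mem_coResidue.2 (by rw [map_zero]; decide))

theorem setOf_le_exitRank :
    {S | S ∈ cycleVertexCovers (3 * k) ∧ 2 * k ≤ exitRank S} = {coResidue k 0, coResidue k 2} := by
  ext S
  refine ⟨fun h => eq_coResidue_of_le_exitRank h.1 h.2, ?_⟩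
  rintro (rfl | rfl)
  · exact ⟨coResidue_mem_cycleVertexCovers 0, le_exitRank_coResidue_zero⟩
  · exact ⟨coResidue_mem_cycleVertexCovers 2, le_exitRank_coResidue_two⟩

theorem supportedHomologyDim_cycleVertexCovers (K : Type*) [CommRing K] [Nontrivial K] :
    supportedHomologyDim K (cycleVertexCovers (3 * k)) (2 * k) = 2 := by
  rw [isElementMatching_cycleVertexCovers.supportedHomologyDim_eq_ncard, setOf_le_exitRank,
    Set.ncard_pair (coResidue_injective.ne (by decide))]
  intro S hS hrank
  rcases eq_coResidue_of_le_exitRank hS hrank with rfl | rfl <;> exact card_coResidue _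

end CycleMatching

/-- For `n ≡ 0 (mod 3)`, `n ≥ 3`, the top graded Betti number of `R/I(Cₙ)` in internal
degree `n` is `β_{2n/3, n} = 2`: any minimal graded free resolution of `R/I(Cₙ)` has
exactly two generators of degree `n` in homological degree `2n/3`. -/
theorem cycle_top_betti_zero_mod_three (K : Type) [Field K] (n : ℕ) (hn : 3 ≤ n)
    (h3 : n % 3 = 0) (β : ℕ → ℕ → ℕ)
    (res : MinimalGradedFreeResolution K n (cycleIdeal K n) β) :
    β (2 * n / 3) n = 2 := by
  obtain ⟨k, rfl⟩ := Nat.dvd_of_mod_eq_zero h3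
  have : NeZero k := ⟨by omega⟩
  have : Fact (1 < 3 * k) := ⟨by omega⟩
  have hI := isStanleyReisner_cycleIdeal K (3 * k)
  calc β (2 * (3 * k) / 3) (3 * k)
      = β (2 * k) (3 * k) := by rw [mul_left_comm, Nat.mul_div_cancel_left _ three_pos]
    _ = koszulHomologyDim (V := ZMod (3 * k)) (mulX K _) (quotientDegreePart (cycleIdeal K (3 * k)))
          (3 * k : ℕ) (2 * k) :=
      res.betti_eq_koszulHomologyDim hI.weightedHomogeneousComponent_mem _ _
    _ = supportedHomologyDim K (cycleVertexCovers (3 * k)) (2 * k) := by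
      rw [← hI.koszulHomologyDim_eq_supportedHomologyDim, ZMod.card]
    _ = 2 := supportedHomologyDim_cycleVertexCovers K
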